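/- arXiv:2209.04236 — 8 statements merged into one kernel-verified Lean document; each statement's English description precedes it below -/
import Mathlib

section
/- Let d ≥ 2. The non-centered Hardy–Littlewood maximal operator M_μ^B associated with the measure μ and the family of open Euclidean (ℓ²) balls in ℝ^d is not of weak type (1,1) with respect to μ: there is no constant C > 0 such that μ({x ∈ ℝ^d : M_μ^B f(x) > λ}) ≤ C λ⁻¹ ‖f‖_{L¹(dμ)} for all f ∈ L¹(dμ) and all λ > 0. -/
open MeasureTheory ENNReal

/-- The exponential measure `dμ(x) = exp(-|x₁|-⋯-|x_d|) dx` on `ℝ^d`. -/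
noncomputable def expMeasure (d : ℕ) : Measure (Fin d → ℝ) :=
  volume.withDensity (fun x => ENNReal.ofReal (Real.exp (-∑ i, |x i|)))

/-- The family of open Euclidean (ℓ²) balls in `ℝ^d`. -/
def euclideanBalls (d : ℕ) : Set (Set (Fin d → ℝ)) :=
  {B | ∃ (z : Fin d → ℝ) (r : ℝ), 0 < r ∧
    B = {y | Real.sqrt (∑ i, (z i - y i) ^ 2) < r}}

/-- The non-centered Hardy–Littlewood maximal operator associated with a measure `μ` and a
family `F` of balls: `M f (x) = sup { (1/μ B) ∫_B |f| dμ : x ∈ B ∈ F, μ B > 0 }`. -/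
noncomputable def maximalOp (d : ℕ) (μ : Measure (Fin d → ℝ))
    (F : Set (Set (Fin d → ℝ))) (f : (Fin d → ℝ) → ℝ) (x : Fin d → ℝ) : ℝ≥0∞ :=
  ⨆ (B : Set (Fin d → ℝ)) (_ : B ∈ F) (_ : x ∈ B) (_ : 0 < μ B),
    (∫⁻ y in B, ENNReal.ofReal |f y| ∂μ) / μ B


/-- Direction `e_i - e_j`. -/
noncomputable def dirU {d : ℕ} (i j : Fin d) (k : Fin d) : ℝ :=
  (if k = i then 1 else 0) - (if k = j then 1 else 0)

/-- Euclidean ball written with squares. -/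
def sqBall {d : ℕ} (z : Fin d → ℝ) (r : ℝ) : Set (Fin d → ℝ) :=
  {y | ∑ k, (z k - y k) ^ 2 < r ^ 2}

lemma sqBall_eq {d : ℕ} (z : Fin d → ℝ) (r : ℝ) (hr : 0 < r) :
    sqBall z r = {y | Real.sqrt (∑ i, (z i - y i) ^ 2) < r} := by
  ext y
  simp only [sqBall, Set.mem_ofPred_eq]
  rw [Real.sqrt_lt' hr]

lemma sqBall_open {d : ℕ} (z : Fin d → ℝ) (r : ℝ) : IsOpen (sqBall z r) := by
  unfold sqBall
  exact isOpen_lt (by fun_prop) (by fun_prop)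

lemma sqBall_abs {d : ℕ} {z y : Fin d → ℝ} {r : ℝ} (hr : 0 < r) (hy : y ∈ sqBall z r)
    (k : Fin d) : |z k - y k| < r := by
  apply abs_lt_of_sq_lt_sq _ hr.le
  refine lt_of_le_of_lt ?_ hy
  exact Finset.single_le_sum (f := fun k => (z k - y k) ^ 2) (fun i _ => sq_nonneg _)
    (Finset.mem_univ k)

lemma dirU_sum {d : ℕ} {i j : Fin d} (hij : i ≠ j) (e : Fin d → ℝ) (a b : ℝ) :
    ∑ k, (e k + a * dirU i j k + b) ^ 2
      = ∑ k, e k ^ 2 + 2 * a * (e i - e j) + 2 * b * ∑ k, e k + 2 * a ^ 2 + b ^ 2 * d := by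
  have h1 : ∑ k, e k * dirU i j k = e i - e j := by
    simp [dirU, mul_sub, Finset.sum_sub_distrib]
  have h2 : ∑ k, dirU i j k = 0 := by
    simp [dirU, Finset.sum_sub_distrib]
  have h3 : ∑ k, dirU i j k ^ 2 = 2 := by
    have : ∀ k, dirU i j k ^ 2 = (if k = i then 1 else 0) + (if k = j then 1 else 0) := by
      intro k
      unfold dirU
      by_cases h : k = i
      · subst h; simp [hij]
      · by_cases h' : k = j
        · subst h'; simp [hij.symm]
        · simp [h, h']
    simp only [this, Finset.sum_add_distrib]
    simp
    norm_num
  have : ∀ k, (e k + a * dirU i j k + b) ^ 2 = e k ^ 2 + 2 * a * (e k * dirU i j k)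
      + 2 * b * e k + a ^ 2 * dirU i j k ^ 2 + 2 * a * b * dirU i j k + b ^ 2 := by
    intro k; ring
  simp only [this, Finset.sum_add_distrib, ← Finset.mul_sum, h1, h2, h3]
  simp
  ring

lemma dirU_sum_lin {d : ℕ} {i j : Fin d} (a b : ℝ) :
    ∑ k, (a * dirU i j k + b) = b * d := by
  have h2 : ∑ k, dirU i j k = 0 := by
    simp [dirU, Finset.sum_sub_distrib]
  rw [Finset.sum_add_distrib, ← Finset.mul_sum, h2]
  simp [mul_comm]

lemma expM_shift {d : ℕ} (S : Set (Fin d → ℝ)) (hS : MeasurableSet S) (w : Fin d → ℝ)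
    (hpos : ∀ x ∈ S, ∀ k, 0 ≤ x k ∧ 0 ≤ x k + w k) :
    expMeasure d {x | x - w ∈ S}
      = ENNReal.ofReal (Real.exp (-∑ k, w k)) * expMeasure d S := by
  have hT : MeasurableSet {x | x - w ∈ S} := (measurable_sub_const w) hS
  unfold expMeasure
  rw [withDensity_apply _ hT, withDensity_apply _ hS, ← lintegral_indicator hT,
    ← lintegral_add_right_eq_self _ w, ← lintegral_const_mul' _ _ ENNReal.ofReal_ne_top,
    ← lintegral_indicator hS]
  congr 1
  ext x
  by_cases hx : x ∈ S
  · rw [Set.indicator_of_mem (by simpa using hx), Set.indicator_of_mem hx,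
      ← ENNReal.ofReal_mul (Real.exp_pos _).le, ← Real.exp_add]
    congr 2
    rw [← neg_add, ← Finset.sum_add_distrib]
    congr 1
    apply Finset.sum_congr rfl
    intro k _
    have := hpos x hx k
    rw [Pi.add_apply, abs_of_nonneg this.1, abs_of_nonneg this.2, add_comm]
  · rw [Set.indicator_of_notMem (by simpa using hx), Set.indicator_of_notMem hx]

lemma expM_pos {d : ℕ} (S : Set (Fin d → ℝ)) (hS : IsOpen S) (hne : S.Nonempty) :
    0 < expMeasure d S := by
  rw [pos_iff_ne_zero]
  intro h
  unfold expMeasure at h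
  have hc : Continuous (fun x : Fin d → ℝ => Real.exp (-∑ i, |x i|)) := by fun_prop
  rw [withDensity_apply_eq_zero' hc.measurable.ennreal_ofReal.aemeasurable] at h
  have : {x : Fin d → ℝ | ENNReal.ofReal (Real.exp (-∑ i, |x i|)) ≠ 0} ∩ S = S := by
    apply Set.inter_eq_right.2
    intro x _
    simp [Real.exp_pos]
  rw [this] at h
  exact (hS.measure_pos volume hne).ne' h

lemma expM_le {d : ℕ} (S : Set (Fin d → ℝ)) : expMeasure d S ≤ volume S := by
  have : expMeasure d ≤ volume := by
    calc expMeasure d ≤ volume.withDensity 1 := by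
          apply withDensity_mono
          filter_upwards with x
          simp only [Pi.one_apply]
          rw [ENNReal.ofReal_le_one, Real.exp_le_one_iff]
          simp only [Left.neg_nonpos_iff]
          positivity
      _ = volume := withDensity_one
  exact this S

lemma expM_ball_lt_top {d : ℕ} (z : Fin d → ℝ) (r : ℝ) (hr : 0 < r) :
    expMeasure d (sqBall z r) < ⊤ := by
  refine (expM_le _).trans_lt (lt_of_le_of_lt (measure_mono ?_)
    (isCompact_Icc (a := fun k => z k - r) (b := fun k => z k + r)).measure_lt_top)
  intro y hy
  constructor <;> intro k <;> have := abs_lt.1 (sqBall_abs hr hy k) <;> simp only <;> linarith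

/-- Tail estimate. -/
lemma tail_bound {d : ℕ} (hd : 2 ≤ d) {i j : Fin d} (hij : i ≠ j) (z : Fin d → ℝ) (m : ℝ)
    (hm : 1 ≤ m) (hz : ∀ k, m ^ 2 ≤ z k) :
    4 * expMeasure d (sqBall z (m ^ 2) ∩ {y | (2 * d + 1) * m ≤ (y i - z i) - (y j - z j)})
      ≤ expMeasure d (sqBall z (m ^ 2)) := by
  set F := sqBall z (m ^ 2) ∩ {y | (2 * d + 1) * m ≤ (y i - z i) - (y j - z j)} with hF
  have hr : 0 < m ^ 2 := by positivity
  have hFm : MeasurableSet F := by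
    apply (sqBall_open _ _).measurableSet.inter
    exact measurableSet_le (by fun_prop) (by fun_prop)
  let w : Fin d → ℝ := fun k => (-m) * dirU i j k + (-1)
  have hbpos : ∀ y ∈ sqBall z (m ^ 2), ∀ k, 0 ≤ y k := by
    intro y hy k
    have := abs_lt.1 (sqBall_abs hr hy k)
    linarith [hz k]
  have hin : ∀ y ∈ F, y + w ∈ sqBall z (m ^ 2) := by
    intro y hy
    have h1 : ∑ k, (z k - y k) ^ 2 < (m ^ 2) ^ 2 := hy.1
    have h2 : (2 * d + 1) * m ≤ (y i - z i) - (y j - z j) := hy.2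
    have h3 : ∑ k, (z k - y k) ≤ d * m ^ 2 := by
      calc ∑ k, (z k - y k) ≤ ∑ k : Fin d, m ^ 2 := by
            apply Finset.sum_le_sum
            intro k _
            exact (abs_lt.1 (sqBall_abs hr hy.1 k)).2.le
        _ = d * m ^ 2 := by simp
    have h4 := dirU_sum hij (fun k => z k - y k) m 1
    have h5 : ∑ k, (z k - (y + w) k) ^ 2 = ∑ k, (z k - y k + m * dirU i j k + 1) ^ 2 := by
      apply Finset.sum_congr rfl
      intro k _
      simp only [w, Pi.add_apply]
      ring
    show ∑ k, (z k - (y + w) k) ^ 2 < (m ^ 2) ^ 2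
    rw [h5, h4]
    have h6 : (2 * d + 1) * m * m ≤ ((y i - z i) - (y j - z j)) * m :=
      mul_le_mul_of_nonneg_right h2 (by linarith)
    have hd0 : (0:ℝ) ≤ d := by positivity
    have h7 : (d : ℝ) * 1 ≤ d * m ^ 2 := mul_le_mul_of_nonneg_left (by nlinarith) hd0
    nlinarith
  have hsh := expM_shift F hFm w (fun x hx k => ⟨hbpos x hx.1 k, hbpos _ (hin x hx) k⟩)
  have hsum : ∑ k, w k = -d := by
    simp only [w]; rw [dirU_sum_lin]; ring
  rw [hsum, neg_neg] at hsh
  have hexp : (4:ℝ≥0∞) ≤ ENNReal.ofReal (Real.exp d) := by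
    have h1 : (2:ℝ) ≤ Real.exp 1 := by have := Real.add_one_le_exp (1:ℝ); linarith
    have h2 : (4:ℝ) ≤ Real.exp d := by
      calc (4:ℝ) ≤ Real.exp 1 * Real.exp 1 := by nlinarith
        _ = Real.exp 2 := by rw [← Real.exp_add]; norm_num
        _ ≤ Real.exp d := Real.exp_le_exp.2 (by exact_mod_cast hd)
    calc (4:ℝ≥0∞) = ENNReal.ofReal 4 := by simp
      _ ≤ _ := ENNReal.ofReal_le_ofReal h2
  calc 4 * expMeasure d F ≤ ENNReal.ofReal (Real.exp d) * expMeasure d F := by gcongr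
    _ = _ := hsh.symm
    _ ≤ _ := by
      apply measure_mono
      intro x hx
      have := hin _ hx
      simpa using this

/-- The core of a ball. -/
def coreBall {d : ℕ} (i j : Fin d) (z : Fin d → ℝ) (m : ℝ) : Set (Fin d → ℝ) :=
  sqBall z (m ^ 2) ∩ {y | |(y i - z i) - (y j - z j)| < (2 * d + 1) * m}

lemma coreBall_meas {d : ℕ} (i j : Fin d) (z : Fin d → ℝ) (m : ℝ) :
    MeasurableSet (coreBall i j z m) :=
  (sqBall_open _ _).measurableSet.inter (measurableSet_lt (by fun_prop) (by fun_prop))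

lemma core_bound {d : ℕ} (hd : 2 ≤ d) {i j : Fin d} (hij : i ≠ j) (z : Fin d → ℝ) (m : ℝ)
    (hm : 1 ≤ m) (hz : ∀ k, m ^ 2 ≤ z k) :
    expMeasure d (sqBall z (m ^ 2)) ≤ 2 * expMeasure d (coreBall i j z m) := by
  have h1 := tail_bound hd hij z m hm hz
  have h2 := tail_bound hd hij.symm z m hm hz
  have hfin := expM_ball_lt_top z (m ^ 2) (by positivity)
  set F1 := sqBall z (m ^ 2) ∩ {y | (2 * d + 1) * m ≤ (y i - z i) - (y j - z j)}
  set F2 := sqBall z (m ^ 2) ∩ {y | (2 * d + 1) * m ≤ (y j - z j) - (y i - z i)}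
  have hsub : sqBall z (m ^ 2) ⊆ coreBall i j z m ∪ (F1 ∪ F2) := by
    intro y hy
    by_cases h : |(y i - z i) - (y j - z j)| < (2 * d + 1) * m
    · exact Or.inl ⟨hy, h⟩
    · rw [not_lt, le_abs] at h
      rcases h with h | h
      · exact Or.inr (Or.inl ⟨hy, h⟩)
      · refine Or.inr (Or.inr ⟨hy, ?_⟩)
        simp only [Set.mem_ofPred_eq]; linarith
  have h3 : expMeasure d (sqBall z (m ^ 2))
      ≤ expMeasure d (coreBall i j z m) + (expMeasure d F1 + expMeasure d F2) :=
    (measure_mono hsub).trans ((measure_union_le _ _).trans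
      (by gcongr; exact measure_union_le _ _))
  have e1 : expMeasure d F1 ≠ ⊤ :=
    ((measure_mono Set.inter_subset_left).trans_lt hfin).ne
  have e2 : expMeasure d F2 ≠ ⊤ :=
    ((measure_mono Set.inter_subset_left).trans_lt hfin).ne
  have e3 : expMeasure d (coreBall i j z m) ≠ ⊤ :=
    ((measure_mono Set.inter_subset_left).trans_lt hfin).ne
  have e4 := hfin.ne
  generalize expMeasure d F1 = a at *
  generalize expMeasure d F2 = b at *
  generalize expMeasure d (coreBall i j z m) = c at *
  generalize expMeasure d (sqBall z (m ^ 2)) = t at *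
  lift a to NNReal using e1
  lift b to NNReal using e2
  lift c to NNReal using e3
  lift t to NNReal using e4
  norm_cast at *
  have h1' : (4:ℝ) * a ≤ t := by exact_mod_cast h1
  have h2' : (4:ℝ) * b ≤ t := by exact_mod_cast h2
  have h3' : (t:ℝ) ≤ c + (a + b) := by exact_mod_cast h3
  have : (t:ℝ) ≤ 2 * c := by linarith
  exact_mod_cast this

theorem euclidean_maximal_not_weak_type_one_one (d : ℕ) (hd : 2 ≤ d) :
    ¬ ∃ C : ℝ, 0 < C ∧
      ∀ f : (Fin d → ℝ) → ℝ, Integrable f (expMeasure d) →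
        ∀ lam : ℝ, 0 < lam →
          expMeasure d {x | ENNReal.ofReal lam
              < maximalOp d (expMeasure d) (euclideanBalls d) f x}
            ≤ ENNReal.ofReal (C / lam) * ∫⁻ x, ENNReal.ofReal |f x| ∂(expMeasure d) := by
  rintro ⟨C, hC, H⟩
  obtain ⟨N, hN⟩ := exists_nat_gt (4 * C)
  have hNpos : (0:ℝ) < N := by linarith
  let i : Fin d := ⟨0, by omega⟩
  let j : Fin d := ⟨1, by omega⟩
  have hij : i ≠ j := by simp [i, j, Fin.ext_iff]
  set A : ℝ := 2 * d + 1 with hA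
  have hA1 : 1 ≤ A := by rw [hA]; have : (0:ℝ) ≤ d := by positivity
                         linarith
  set m : ℝ := 2 * N * A + 1 with hm
  have hm1 : 1 ≤ m := by rw [hm]; have : 0 ≤ 2 * N * A := by positivity
                         linarith
  have hr : 0 < m ^ 2 := by positivity
  set R : ℝ := m ^ 2 + N * (A * m) with hR
  let p : Fin d → ℝ := fun _ => R
  let z : ℕ → Fin d → ℝ := fun n k => R + n * (A * m) * dirU i j k
  have hdu : ∀ k, |dirU i j k| ≤ 1 := by
    intro k
    unfold dirU
    split_ifs <;> simp
  have hz : ∀ n < N, ∀ k, m ^ 2 ≤ z n k := by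
    intro n hn k
    have h1 := (abs_le.1 (hdu k)).1
    have h2 : (n:ℝ) ≤ N := by exact_mod_cast hn.le
    have h3 : 0 ≤ A * m := by positivity
    have h4 : (n:ℝ) * (A * m) ≤ N * (A * m) := mul_le_mul_of_nonneg_right h2 h3
    have h5 : 0 ≤ (n:ℝ) * (A * m) := by positivity
    simp only [z, hR]
    nlinarith
  have hp : ∀ n < N, p ∈ sqBall (z n) (m ^ 2) := by
    intro n hn
    have h2 : (n:ℝ) ≤ N := by exact_mod_cast hn.le
    have h4 := dirU_sum hij (fun _ => 0) (n * (A * m)) 0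
    have h5 : ∑ k, (z n k - p k) ^ 2 = ∑ k, (0 + n * (A * m) * dirU i j k + 0) ^ 2 := by
      apply Finset.sum_congr rfl
      intro k _
      simp only [z, p]
      ring
    show ∑ k, (z n k - p k) ^ 2 < (m ^ 2) ^ 2
    rw [h5, h4]
    simp
    have h6 : (n:ℝ) * A ≤ N * A := mul_le_mul_of_nonneg_right h2 (by linarith)
    have h7 : 2 * (n * A) < m := by rw [hm]; linarith
    have h8 : 0 ≤ n * A := by positivity
    have h9 : 2 * (n * A) ^ 2 < m ^ 2 := by nlinarith
    nlinarith
  set μ := expMeasure d with hμ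
  have hb0 : ∀ n < N, μ (sqBall (z n) (m ^ 2)) = μ (sqBall (z 0) (m ^ 2)) := by
    intro n hn
    have hN0 : 0 < N := by omega
    have hshift : {x | x - (fun k => n * (A * m) * dirU i j k + 0) ∈ sqBall (z 0) (m ^ 2)}
        = sqBall (z n) (m ^ 2) := by
      ext x
      simp only [sqBall, Set.mem_ofPred_eq, z, Pi.sub_apply]
      have : ∀ k, (R + ((0:ℕ):ℝ) * (A * m) * dirU i j k - (x k - (n * (A * m) * dirU i j k + 0)))
        = R + n * (A * m) * dirU i j k - x k := by intro k; push_cast; ring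
      simp only [this]
    have hbpos : ∀ n < N, ∀ y ∈ sqBall (z n) (m ^ 2), ∀ k, 0 ≤ y k := by
      intro n hn y hy k
      have := abs_lt.1 (sqBall_abs hr hy k)
      linarith [hz n hn k]
    have := expM_shift (sqBall (z 0) (m ^ 2)) (sqBall_open _ _).measurableSet
      (fun k => n * (A * m) * dirU i j k + 0) (by
        intro x hx k
        refine ⟨hbpos 0 hN0 x hx k, ?_⟩
        have h : x + (fun k => n * (A * m) * dirU i j k + 0) ∈ sqBall (z n) (m ^ 2) := by
          rw [← hshift]; simpa using hx
        exact hbpos n hn _ h k)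
    rw [hshift, dirU_sum_lin] at this
    simpa using this
  set b := μ (sqBall (z 0) (m ^ 2)) with hb
  let G : Set (Fin d → ℝ) := ⋂ n ∈ Finset.range N, sqBall (z n) (m ^ 2)
  have hGo : IsOpen G := isOpen_biInter_finset (fun n _ => sqBall_open _ _)
  have hGp : p ∈ G := by
    simp only [G, Set.mem_iInter, Finset.mem_range]
    exact hp
  have hGsub : ∀ n < N, G ⊆ sqBall (z n) (m ^ 2) := by
    intro n hn x hx
    simp only [G, Set.mem_iInter, Finset.mem_range] at hx
    exact hx n hn
  have hN0 : 0 < N := by exact_mod_cast hNpos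
  have hbfin : b < ⊤ := expM_ball_lt_top _ _ hr
  have hGpos : 0 < μ G := expM_pos G hGo ⟨p, hGp⟩
  have hGb : μ G ≤ b := measure_mono (hGsub 0 hN0)
  have hbpos : 0 < b := hGpos.trans_le hGb
  have hGfin : μ G < ⊤ := hGb.trans_lt hbfin
  have hgr : 0 < (μ G).toReal := ENNReal.toReal_pos hGpos.ne' hGfin.ne
  have hbr : 0 < b.toReal := ENNReal.toReal_pos hbpos.ne' hbfin.ne
  let f : (Fin d → ℝ) → ℝ := G.indicator 1
  have hf : Integrable f μ := by
    apply (integrable_indicator_iff hGo.measurableSet).2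
    exact integrableOn_const hGfin.ne
  have hfabs : ∀ x, ENNReal.ofReal |f x| = G.indicator 1 x := by
    intro x
    by_cases hx : x ∈ G <;> simp [f, hx]
  have hfint : ∫⁻ x, ENNReal.ofReal |f x| ∂μ = μ G := by
    simp only [hfabs]
    exact lintegral_indicator_one hGo.measurableSet
  have hlam : 0 < (μ G).toReal / (2 * b.toReal) := by positivity
  have key := H f hf _ hlam
  rw [hfint] at key
  have hsub : (⋃ n ∈ Finset.range N, coreBall i j (z n) m) ⊆
      {x | ENNReal.ofReal ((μ G).toReal / (2 * b.toReal))
              < maximalOp d μ (euclideanBalls d) f x} := by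
    intro x hx
    simp only [Set.mem_iUnion, Finset.mem_range] at hx
    obtain ⟨n, hn, hx⟩ := hx
    have hxB := hx.1
    have hle : μ G / b ≤ maximalOp d μ (euclideanBalls d) f x := by
      unfold maximalOp
      refine le_iSup_of_le (sqBall (z n) (m ^ 2)) (le_iSup_of_le ?_ (le_iSup_of_le hxB
        (le_iSup_of_le ?_ ?_)))
      · exact ⟨z n, m ^ 2, hr, sqBall_eq _ _ hr⟩
      · rw [hb0 n hn]; exact hbpos
      · rw [hb0 n hn]
        apply ENNReal.div_le_div_right
        simp only [hfabs]
        rw [lintegral_indicator_one hGo.measurableSet, Measure.restrict_apply hGo.measurableSet,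
          Set.inter_eq_left.2 (hGsub n hn)]
    refine lt_of_lt_of_le ?_ hle
    have : μ G / b = ENNReal.ofReal ((μ G).toReal / b.toReal) := by
      rw [ENNReal.ofReal_div_of_pos hbr, ENNReal.ofReal_toReal hGfin.ne,
        ENNReal.ofReal_toReal hbfin.ne]
    rw [this]
    apply (ENNReal.ofReal_lt_ofReal_iff (by positivity)).2
    apply div_lt_div_of_pos_left hgr hbr
    linarith
  have hdisj : Set.PairwiseDisjoint (↑(Finset.range N)) (fun n => coreBall i j (z n) m) := by
    have haux : ∀ n n' : ℕ, n < n' →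
        Disjoint (coreBall i j (z n) m) (coreBall i j (z n') m) := by
      intro n n' h
      rw [Set.disjoint_left]
      intro x hx hx'
      have h1 : |(x i - z n i) - (x j - z n j)| < A * m := hx.2
      have h2 : |(x i - z n' i) - (x j - z n' j)| < A * m := hx'.2
      have e1 : dirU i j i = 1 := by simp [dirU, hij]
      have e2 : dirU i j j = -1 := by simp [dirU, hij.symm]
      simp only [z, e1, e2] at h1 h2
      rw [abs_lt] at h1 h2
      have h3 : (n:ℝ) + 1 ≤ n' := by exact_mod_cast h
      have h4 : 0 ≤ A * m := by positivity
      have h5 := mul_le_mul_of_nonneg_right h3 h4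
      linarith
    intro n _ n' _ hne
    rcases lt_or_gt_of_ne hne with h | h
    · exact haux n n' h
    · exact (haux n' n h).symm
  have hmeas : (N:ℝ≥0∞) * b ≤ 2 * μ (⋃ n ∈ Finset.range N, coreBall i j (z n) m) := by
    rw [measure_biUnion_finset hdisj (fun n _ => coreBall_meas _ _ _ _), Finset.mul_sum]
    calc (N:ℝ≥0∞) * b = ∑ n ∈ Finset.range N, b := by simp
      _ ≤ _ := by
        apply Finset.sum_le_sum
        intro n hn
        have hn' := Finset.mem_range.1 hn
        rw [← hb0 n hn']
        exact core_bound hd hij (z n) m hm1 (hz n hn')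
  have hfinal : (N:ℝ≥0∞) * b ≤
      2 * (ENNReal.ofReal (C / ((μ G).toReal / (2 * b.toReal))) * μ G) :=
    hmeas.trans (by gcongr; exact (measure_mono hsub).trans key)
  have hreal := ENNReal.toReal_mono (by finiteness) hfinal
  simp only [ENNReal.toReal_mul, ENNReal.toReal_natCast, ENNReal.toReal_ofNat] at hreal
  rw [ENNReal.toReal_ofReal (by positivity)] at hreal
  have : 2 * (C / ((μ G).toReal / (2 * b.toReal)) * (μ G).toReal) = 4 * C * b.toReal := by
    field_simp
    ring
  rw [this] at hreal
  have := le_of_mul_le_mul_right hreal hbr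
  linarith
end

section
/- Let d ≥ 2. The non-centered Hardy–Littlewood maximal operator M_μ^Q associated with the measure μ and the family of open ℓ^∞ balls (cubes with sides parallel to the coordinate axes) in ℝ^d is not of weak type (1,1) with respect to μ: there is no constant C > 0 such that μ({x ∈ ℝ^d : M_μ^Q f(x) > λ}) ≤ C λ⁻¹ ‖f‖_{L¹(dμ)} for all f ∈ L¹(dμ) and all λ > 0. -/
open MeasureTheory ENNReal

/-- The family of open ℓ^∞ balls (cubes with sides parallel to the axes) in `ℝ^d`. -/
def cubeBalls (d : ℕ) : Set (Set (Fin d → ℝ)) :=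
  {B | ∃ (z : Fin d → ℝ) (r : ℝ), 0 < r ∧
    B = {y | ∀ i, |z i - y i| < r}}

namespace CubeMax

/-- density -/
noncomputable def dens (d : ℕ) (x : Fin d → ℝ) : ℝ≥0∞ :=
  ENNReal.ofReal (Real.exp (-∑ i, |x i|))

lemma dens_meas (d : ℕ) : Measurable (dens d) := by
  unfold dens; fun_prop

lemma expMeasure_apply (d : ℕ) {s : Set (Fin d → ℝ)} (hs : MeasurableSet s) :
    expMeasure d s = ∫⁻ x in s, dens d x := withDensity_apply _ hs

lemma integrable_exp_neg_abs : Integrable (fun t : ℝ => Real.exp (-|t|)) := by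
  have h0 : IntegrableOn (fun t : ℝ => Real.exp (-|t|)) (Set.Ioi 0) := by
    refine (integrableOn_exp_neg_Ioi 0).congr_fun (fun t ht => ?_) measurableSet_Ioi
    simp only [abs_of_pos (Set.mem_Ioi.1 ht)]
  have h1 : IntegrableOn (fun t : ℝ => Real.exp (-|t|)) (Set.Iic 0) := by
    refine (integrableOn_exp_Iic 0).congr_fun (fun t ht => ?_) measurableSet_Iic
    simp only [abs_of_nonpos (Set.mem_Iic.1 ht), neg_neg]
  rw [← integrableOn_univ, ← Set.Iic_union_Ioi (a := (0:ℝ))]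
  exact h1.union h0

lemma expMeasure_univ_lt_top (d : ℕ) : expMeasure d Set.univ < ∞ := by
  rw [expMeasure_apply d MeasurableSet.univ, Measure.restrict_univ]
  have h : Integrable (fun x : Fin d → ℝ => ∏ i, Real.exp (-|x i|)) :=
    Integrable.fintype_prod (f := fun _ t => Real.exp (-|t|)) (fun _ => integrable_exp_neg_abs)
  have h2 := h.lintegral_lt_top
  convert h2 using 4 with x
  rw [← Real.exp_sum, Finset.sum_neg_distrib, dens]

/-- unit box -/
def box {d : ℕ} (c : Fin d → ℝ) : Set (Fin d → ℝ) :=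
  Set.pi Set.univ (fun i => Set.Ioo (c i) (c i + 1))

lemma box_meas {d : ℕ} (c : Fin d → ℝ) : MeasurableSet (box c) :=
  MeasurableSet.univ_pi (fun _ => measurableSet_Ioo)

lemma mem_box {d : ℕ} (c x : Fin d → ℝ) : x ∈ box c ↔ ∀ i, c i < x i ∧ x i < c i + 1 := by
  simp [box]

lemma box_lower {d : ℕ} (c : Fin d → ℝ) (hc : ∀ i, 0 ≤ c i) :
    ENNReal.ofReal (Real.exp (-(∑ i, c i) - d)) ≤ expMeasure d (box c) := by
  have hv : volume (box c) = 1 := by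
    rw [box, Real.volume_pi_Ioo]; simp
  rw [expMeasure_apply d (box_meas c)]
  calc _ = ∫⁻ x in box c, ENNReal.ofReal (Real.exp (-(∑ i, c i) - d)) := by
        rw [setLIntegral_const, hv, mul_one]
    _ ≤ _ := by
        apply setLIntegral_mono (dens_meas d)
        intro x hx
        rw [mem_box] at hx
        apply ENNReal.ofReal_le_ofReal
        apply Real.exp_le_exp.2
        have : ∑ i, |x i| ≤ ∑ i, (c i + 1) := by
          apply Finset.sum_le_sum
          intro i _
          rw [abs_of_pos (lt_of_le_of_lt (hc i) (hx i).1)]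
          exact (hx i).2.le
        rw [Finset.sum_add_distrib] at this
        simp at this
        linarith

lemma upper {d : ℕ} (a : Fin d → ℝ) (B : Set (Fin d → ℝ)) (hB : MeasurableSet B)
    (h : ∀ y ∈ B, ∀ i, a i + |y i - a i| ≤ |y i|) :
    expMeasure d B ≤ ENNReal.ofReal (Real.exp (-∑ i, a i)) * expMeasure d Set.univ := by
  rw [expMeasure_apply d hB, expMeasure_apply d MeasurableSet.univ, Measure.restrict_univ,
    ← lintegral_sub_right_eq_self (μ := volume) (dens d) a, ← lintegral_const_mul]
  · refine le_trans (setLIntegral_mono ?_ ?_) (setLIntegral_le_lintegral B _)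
    · have := dens_meas d
      fun_prop
    · intro y hy
      unfold dens
      rw [← ENNReal.ofReal_mul (Real.exp_pos _).le, ← Real.exp_add]
      apply ENNReal.ofReal_le_ofReal
      apply Real.exp_le_exp.2
      have := Finset.sum_le_sum (s := Finset.univ) (fun i _ => h y hy i)
      rw [Finset.sum_add_distrib] at this
      simp only [Pi.sub_apply]
      linarith
  · have := dens_meas d
    fun_prop

/-- a vector supported on the first two coordinates -/
noncomputable def vec (d : ℕ) (s t : ℝ) : Fin d → ℝ :=
  fun i => if i.1 = 0 then s else if i.1 = 1 then t else 0

lemma vec_sum (d : ℕ) (hd : 2 ≤ d) (s t : ℝ) : ∑ i, vec d s t i = s + t := by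
  obtain ⟨e, rfl⟩ : ∃ e, d = e + 2 := ⟨d - 2, by omega⟩
  rw [Fin.sum_univ_succ, Fin.sum_univ_succ]
  simp [vec]

/-- the cube -/
noncomputable def cube (d : ℕ) (s t r : ℝ) : Set (Fin d → ℝ) :=
  {y | ∀ i, |vec d (s + r) (t + r) i - y i| < r}

lemma cube_meas (d : ℕ) (s t r : ℝ) : MeasurableSet (cube d s t r) := by
  unfold cube
  rw [Set.ofPred_forall]
  refine MeasurableSet.iInter fun i => ?_
  exact measurableSet_lt (by fun_prop) (by fun_prop)

lemma cube_upper (d : ℕ) (hd : 2 ≤ d) (s t r : ℝ) (hs : 0 ≤ s) (ht : 0 ≤ t) :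
    expMeasure d (cube d s t r) ≤
      ENNReal.ofReal (Real.exp (-(s + t))) * expMeasure d Set.univ := by
  rw [← vec_sum d hd s t]
  apply upper _ _ (cube_meas d s t r)
  intro y hy i
  have := hy i
  unfold vec at *
  rw [abs_lt] at this
  split_ifs at * with h1 h2
  · rw [abs_of_nonneg (by linarith), abs_of_nonneg (by linarith)]; linarith
  · rw [abs_of_nonneg (by linarith), abs_of_nonneg (by linarith)]; linarith
  · simp

lemma box_sub_cube (d : ℕ) (s t r u v : ℝ) (hr : 1 ≤ r) (hu : s ≤ u) (hv : t ≤ v)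
    (hu' : u + 1 ≤ s + 2 * r) (hv' : v + 1 ≤ t + 2 * r) :
    box (vec d u v) ⊆ cube d s t r := by
  intro y hy i
  rw [mem_box] at hy
  have := hy i
  unfold vec at *
  rw [abs_lt]
  split_ifs at * with h1 h2 <;> constructor <;> linarith

end CubeMax

open CubeMax in
/-- For `d ≥ 2`, the non-centered maximal operator `M_μ^𝓠` associated with the exponential
measure `μ` and the family of open cubes (ℓ^∞ balls) is not of weak type (1,1) w.r.t. `μ`. -/
theorem cube_maximal_not_weak_type_one_one (d : ℕ) (hd : 2 ≤ d) :
    ¬ ∃ C : ℝ, 0 < C ∧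
      ∀ f : (Fin d → ℝ) → ℝ, Integrable f (expMeasure d) →
        ∀ lam : ℝ, 0 < lam →
          expMeasure d {x | ENNReal.ofReal lam
              < maximalOp d (expMeasure d) (cubeBalls d) f x}
            ≤ ENNReal.ofReal (C / lam) * ∫⁻ x, ENNReal.ofReal |f x| ∂(expMeasure d) := by
  rintro ⟨C, hC, H⟩
  have hKtop := expMeasure_univ_lt_top d
  have hfin : ∀ s, expMeasure d s ≠ ∞ := fun s =>
    (lt_of_le_of_lt (measure_mono (Set.subset_univ s)) hKtop).ne
  have hbpos : ∀ c : Fin d → ℝ, (∀ i, 0 ≤ c i) → 0 < expMeasure d (box c) := fun c hc =>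
    lt_of_lt_of_le (ENNReal.ofReal_pos.2 (Real.exp_pos _)) (box_lower c hc)
  have hvec : ∀ s t : ℝ, 0 ≤ s → 0 ≤ t → ∀ i, 0 ≤ vec d s t i := by
    intro s t hs ht i
    unfold vec
    split_ifs <;> simp [*]
  obtain ⟨K, hK⟩ : ∃ K, K = (expMeasure d Set.univ).toReal := ⟨_, rfl⟩
  have hKeq : expMeasure d Set.univ = ENNReal.ofReal K := by
    rw [hK, ENNReal.ofReal_toReal hKtop.ne]
  have hKpos : 0 < K := by
    rw [hK]
    exact ENNReal.toReal_pos (lt_of_lt_of_le (hbpos (vec d 0 0) (hvec 0 0 le_rfl le_rfl))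
      (measure_mono (Set.subset_univ _))).ne' hKtop.ne
  obtain ⟨N, hN⟩ := exists_nat_gt (2 * C * K * Real.exp (2 + d))
  obtain ⟨L, hL⟩ : ∃ L : ℝ, L = N + 1 := ⟨_, rfl⟩
  have hN0 : (0:ℝ) ≤ N := N.cast_nonneg
  have hL0 : 0 ≤ L := by linarith
  have hQ := hbpos (vec d L L) (hvec L L hL0 hL0)
  obtain ⟨m, hm⟩ : ∃ m, m = (expMeasure d (box (vec d L L))).toReal := ⟨_, rfl⟩
  have hmeq : expMeasure d (box (vec d L L)) = ENNReal.ofReal m := by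
    rw [hm, ENNReal.ofReal_toReal (hfin _)]
  have hmpos : 0 < m := by
    rw [hm]; exact ENNReal.toReal_pos hQ.ne' (hfin _)
  set f : (Fin d → ℝ) → ℝ := (box (vec d L L)).indicator (fun _ => 1) with hf
  have hfabs : ∀ x, ENNReal.ofReal |f x| = (box (vec d L L)).indicator (fun _ => 1) x := by
    intro x
    by_cases hx : x ∈ box (vec d L L) <;> simp [hf, hx]
  have hfint : Integrable f (expMeasure d) := by
    rw [hf, integrable_indicator_iff (box_meas _)]
    exact integrableOn_const (hfin _)
  set D : ℝ := Real.exp (-(L - 2)) * K with hD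
  have hDpos : 0 < D := mul_pos (Real.exp_pos _) hKpos
  have key := H f hfint (m / (2 * D)) (by positivity)
  simp_rw [hfabs] at key
  rw [lintegral_indicator_const (box_meas _), one_mul, hmeq,
    ← ENNReal.ofReal_mul (by positivity)] at key
  set c : ℕ → Fin d → ℝ := fun j => vec d (j + 1) (L - (j + 1)) with hc
  have hsub : (⋃ j ∈ Finset.range N, box (c j)) ⊆ {x | ENNReal.ofReal (m / (2 * D))
      < maximalOp d (expMeasure d) (cubeBalls d) f x} := by
    intro x hx
    simp only [Set.mem_iUnion, Finset.mem_range] at hx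
    obtain ⟨j, hj, hx⟩ := hx
    have hj' : (j:ℝ) + 1 ≤ N := by exact_mod_cast hj
    have hj0 : (0:ℝ) ≤ j := j.cast_nonneg
    have hs1 : box (c j) ⊆ cube d j (L - j - 2) (L + 2) := by
      apply box_sub_cube <;> linarith
    have hs2 : box (vec d L L) ⊆ cube d j (L - j - 2) (L + 2) := by
      apply box_sub_cube <;> linarith
    have hup := cube_upper d hd j (L - j - 2) (L + 2) hj0 (by linarith)
    rw [hKeq, ← ENNReal.ofReal_mul (Real.exp_pos _).le,
      show -((j:ℝ) + (L - j - 2)) = -(L - 2) by ring, ← hD] at hup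
    have hpos : 0 < expMeasure d (cube d j (L - j - 2) (L + 2)) :=
      lt_of_lt_of_le hQ (measure_mono hs2)
    have hlow : ENNReal.ofReal m ≤
        ∫⁻ y in cube d j (L - j - 2) (L + 2), ENNReal.ofReal |f y| ∂(expMeasure d) := by
      simp_rw [hfabs]
      rw [lintegral_indicator_const (box_meas _), one_mul,
        Measure.restrict_apply (box_meas _), Set.inter_eq_self_of_subset_left hs2, hmeq]
    have hlt : ENNReal.ofReal (m / (2 * D)) < ENNReal.ofReal (m / D) := by
      rw [ENNReal.ofReal_lt_ofReal_iff (by positivity)]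
      apply div_lt_div_of_pos_left hmpos hDpos
      linarith
    refine lt_of_lt_of_le hlt ?_
    rw [ENNReal.ofReal_div_of_pos hDpos]
    refine (ENNReal.div_le_div hlow hup).trans ?_
    unfold maximalOp
    refine le_iSup_of_le (cube d j (L - j - 2) (L + 2)) ?_
    refine le_iSup_of_le ⟨_, L + 2, by linarith, rfl⟩ ?_
    refine le_iSup_of_le (hs1 hx) ?_
    exact le_iSup_of_le hpos le_rfl
  have hdisj : Set.PairwiseDisjoint (↑(Finset.range N)) (fun j => box (c j)) := by
    intro j _ k _ hjk
    rw [Function.onFun, Set.disjoint_left]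
    intro x hx hy
    rw [mem_box] at hx hy
    have h1 := hx ⟨0, by omega⟩
    have h2 := hy ⟨0, by omega⟩
    simp only [hc, vec, if_true] at h1 h2
    have h3 : (j:ℝ) < k + 1 := by linarith
    have h4 : (k:ℝ) < j + 1 := by linarith
    norm_cast at h3 h4
    omega
  have h1 : ENNReal.ofReal (N * Real.exp (-L - d)) ≤
      expMeasure d (⋃ j ∈ Finset.range N, box (c j)) := by
    rw [measure_biUnion_finset hdisj (fun j _ => box_meas _)]
    calc _ = ∑ j ∈ Finset.range N, ENNReal.ofReal (Real.exp (-L - d)) := by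
          rw [Finset.sum_const, Finset.card_range, nsmul_eq_mul, ENNReal.ofReal_mul hN0]
          simp
      _ ≤ _ := by
          apply Finset.sum_le_sum
          intro j hj
          have hj' : (j:ℝ) + 1 ≤ N := by exact_mod_cast Finset.mem_range.1 hj
          have := box_lower (c j) (hvec _ _ (by positivity) (by linarith))
          rw [hc, vec_sum d hd, add_sub_cancel] at this
          exact this
  have h2 := (h1.trans (measure_mono hsub)).trans key
  rw [ENNReal.ofReal_le_ofReal_iff (by positivity)] at h2
  have h3 : C / (m / (2 * D)) * m = 2 * C * K * Real.exp (2 + d) * Real.exp (-L - d) := by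
    rw [mul_assoc (2 * C * K), ← Real.exp_add, show (2 + d + (-L - d) : ℝ) = -(L - 2) by ring]
    have h4 : C / (m / (2 * D)) * m = 2 * C * D := by
      field_simp
    rw [h4, hD]
    ring
  rw [h3] at h2
  have := le_of_mul_le_mul_right h2 (Real.exp_pos _)
  linarith
end

section
/- Let d ≥ 2. The non-centered Hardy–Littlewood maximal operator M_μ^D associated with the measure μ and the family of open ℓ¹ balls (diamonds) in ℝ^d is not of weak type (1,1) with respect to μ: there is no constant C > 0 such that μ({x ∈ ℝ^d : M_μ^D f(x) > λ}) ≤ C λ⁻¹ ‖f‖_{L¹(dμ)} for all f ∈ L¹(dμ) and all λ > 0. -/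
open MeasureTheory ENNReal

/-- The family of open ℓ¹ balls (diamonds) in `ℝ^d`. -/
def diamondBalls (d : ℕ) : Set (Set (Fin d → ℝ)) :=
  {B | ∃ (z : Fin d → ℝ) (r : ℝ), 0 < r ∧
    B = {y | ∑ i, |z i - y i| < r}}

lemma slice_aux (n : ℕ) (g : ℝ → ℝ≥0∞) (hg : Measurable g) (S : Set (Fin n → ℝ))
    (hS : MeasurableSet S) :
    ∫⁻ y : Fin (n+1) → ℝ, g (∑ i, y i) * S.indicator 1 (fun i : Fin n => y i.succ)
      = (∫⁻ u, g u) * volume S := by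
  have h := (volume_preserving_piFinSuccAbove (fun _ : Fin (n+1) => ℝ) 0)
  have hm : Measurable (fun p : ℝ × (Fin n → ℝ) => g (p.1 + ∑ i, p.2 i) * S.indicator 1 p.2) := by
    apply Measurable.mul
    · exact hg.comp (by fun_prop)
    · exact (measurable_one.indicator hS).comp measurable_snd
  have h1 := h.lintegral_comp hm
  have h2 : ∀ y : Fin (n+1) → ℝ, g (∑ i, y i) * S.indicator 1 (fun i : Fin n => y i.succ)
      = (fun p : ℝ × (Fin n → ℝ) => g (p.1 + ∑ i, p.2 i) * S.indicator 1 p.2)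
        ((MeasurableEquiv.piFinSuccAbove (fun _ : Fin (n+1) => ℝ) 0) y) := by
    intro y
    rw [Fin.sum_univ_succ]
    simp [MeasurableEquiv.piFinSuccAbove, Fin.removeNth, Fin.tail]
    rfl
  rw [lintegral_congr h2, h1, Measure.volume_eq_prod, lintegral_prod_symm _ hm.aemeasurable]
  have h3 : ∀ y : Fin n → ℝ, ∫⁻ x, g (x + ∑ i, y i) * S.indicator 1 y
      = (∫⁻ u, g u) * S.indicator 1 y := by
    intro y
    have hgy : Measurable fun x => g (x + ∑ i, y i) := hg.comp (by fun_prop)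
    rw [lintegral_mul_const _ hgy, lintegral_add_right_eq_self]
  simp only [h3]
  rw [lintegral_const_mul _ (measurable_one.indicator hS), lintegral_indicator_one hS]

lemma upper_aux (n : ℕ) (z r : ℝ) (hr : 0 < r) :
    expMeasure (n+1) {y | ∑ i, |z - y i| < r}
      ≤ ENNReal.ofReal (Real.exp (-((n+1)*z - r)) * (2*r)^n) := by
  have hB : MeasurableSet {y : Fin (n+1) → ℝ | ∑ i, |z - y i| < r} :=
    measurableSet_lt (by fun_prop) (by fun_prop)
  set b := (n+1)*z - r with hb
  set g : ℝ → ℝ≥0∞ := (Set.Ioi b).indicator (fun u => ENNReal.ofReal (Real.exp (-u))) with hg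
  have hgm : Measurable g := Measurable.indicator (by fun_prop) measurableSet_Ioi
  set S : Set (Fin n → ℝ) := Set.univ.pi (fun _ => Set.Ioo (z - r) (z + r)) with hSdef
  have hS : MeasurableSet S := MeasurableSet.univ_pi (fun _ => measurableSet_Ioo)
  have hvol : volume S = ENNReal.ofReal ((2*r)^n) := by
    rw [hSdef, Real.volume_pi_Ioo]
    simp only [Finset.prod_const, Finset.card_univ, Fintype.card_fin]
    rw [← ENNReal.ofReal_pow (by linarith)]
    congr 2; ring
  have hgi : ∫⁻ u, g u = ENNReal.ofReal (Real.exp (-b)) := by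
    rw [hg, lintegral_indicator measurableSet_Ioi,
      ← ofReal_integral_eq_lintegral_ofReal, integral_exp_neg_Ioi]
    · exact integrableOn_exp_neg_Ioi b
    · exact Filter.Eventually.of_forall fun u => (Real.exp_pos _).le
  rw [expMeasure, withDensity_apply _ hB, ← lintegral_indicator hB,
    ENNReal.ofReal_mul (Real.exp_pos _).le, ← hgi, ← hvol, ← slice_aux n g hgm S hS]
  apply lintegral_mono
  intro y
  by_cases hy : y ∈ {y : Fin (n+1) → ℝ | ∑ i, |z - y i| < r}
  · rw [Set.indicator_of_mem hy]
    have hy' : ∑ i, |z - y i| < r := hy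
    have h1 : (fun i : Fin n => y i.succ) ∈ S := by
      intro i _
      have : |z - y i.succ| ≤ ∑ i, |z - y i| :=
        Finset.single_le_sum (f := fun i => |z - y i|) (fun i _ => abs_nonneg _)
          (Finset.mem_univ _)
      have := abs_lt.1 (this.trans_lt hy')
      constructor <;> simp <;> linarith [this.1, this.2]
    have h2 : ∑ i, y i ∈ Set.Ioi b := by
      have : ∑ i, (z - y i) ≤ ∑ i, |z - y i| := Finset.sum_le_sum fun i _ => le_abs_self _
      rw [Finset.sum_sub_distrib] at this
      simp at this
      simp only [Set.mem_Ioi]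
      linarith
    simp only [hg]
    rw [Set.indicator_of_mem h1, Set.indicator_of_mem h2]
    simp only [Pi.one_apply, mul_one]
    apply ENNReal.ofReal_le_ofReal
    apply Real.exp_le_exp.2
    exact neg_le_neg (Finset.sum_le_sum fun i _ => le_abs_self _)
  · rw [Set.indicator_of_notMem hy]; exact zero_le

def Eset (n : ℕ) (z r : ℝ) : Set (Fin (n+1) → ℝ) :=
  {y | ((n+1)*z - r < ∑ i, y i ∧ ∑ i, y i < (n+1)*z - r + 1) ∧
    (fun i : Fin n => y i.succ) ∈
      Set.univ.pi (fun _ : Fin n => Set.Ioo (z - r/(n+1)) (z - r/(2*(n+1))))}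

lemma Eset_meas (n : ℕ) (z r : ℝ) : MeasurableSet (Eset n z r) := by
  apply MeasurableSet.inter
  · apply MeasurableSet.inter
    · exact measurableSet_lt (f := fun _ => (n+1)*z - r)
        (g := fun y : Fin (n+1) → ℝ => ∑ i, y i) (by fun_prop) (by fun_prop)
    · exact measurableSet_lt (g := fun _ => (n+1)*z - r + 1)
        (f := fun y : Fin (n+1) → ℝ => ∑ i, y i) (by fun_prop) (by fun_prop)
  · exact (MeasurableSet.univ_pi (fun _ => measurableSet_Ioo)).preimage (by fun_prop)

lemma Eset_sub (n : ℕ) (z r : ℝ) (hr : n + 1 ≤ r) :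
    Eset n z r ⊆ {y | ∑ i, |z - y i| < r} := by
  rintro y ⟨⟨h1, h2⟩, h3⟩
  have hn : (0:ℝ) < n + 1 := by positivity
  have hr0 : 0 < r := by linarith
  have hs : ∀ i : Fin n, y i.succ < z := by
    intro i
    have := (h3 i trivial).2
    have h4 : 0 < r/(2*(n+1)) := by positivity
    simp at this
    linarith
  have h0 : y 0 ≤ z := by
    have h5 : ∑ i : Fin n, (z - r/(n+1)) ≤ ∑ i : Fin n, y i.succ :=
      Finset.sum_le_sum fun i _ => (h3 i trivial).1.le
    rw [Fin.sum_univ_succ] at h2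
    simp at h5
    have h6 : (n+1) * (r/(n+1)) = r := by field_simp
    have h7 : 1 ≤ r/(n+1) := by rw [le_div_iff₀ hn]; linarith
    nlinarith
  have hall : ∀ i, |z - y i| = z - y i := by
    intro i
    apply abs_of_nonneg
    refine Fin.cases ?_ (fun j => ?_) i
    · linarith
    · linarith [hs j]
  show ∑ i, |z - y i| < r
  simp only [hall, Finset.sum_sub_distrib]
  simp
  linarith

lemma lower_aux (n : ℕ) (z r : ℝ) (hr : n + 1 ≤ r) (hz : r ≤ z) :
    ENNReal.ofReal (Real.exp (-((n+1)*z - r) - 1) * (r/(2*(n+1)))^n)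
      ≤ expMeasure (n+1) (Eset n z r) := by
  have hn : (0:ℝ) < n + 1 := by positivity
  have hr0 : 0 < r := by linarith
  have hsub := Eset_sub n z r hr
  have hE := Eset_meas n z r
  set b := (n+1)*z - r with hb
  set g : ℝ → ℝ≥0∞ := (Set.Ioo b (b+1)).indicator
    (fun u => ENNReal.ofReal (Real.exp (-u))) with hg
  have hgm : Measurable g := Measurable.indicator (by fun_prop) measurableSet_Ioo
  set S : Set (Fin n → ℝ) := Set.univ.pi
    (fun _ => Set.Ioo (z - r/(n+1)) (z - r/(2*(n+1)))) with hSdef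
  have hS : MeasurableSet S := MeasurableSet.univ_pi (fun _ => measurableSet_Ioo)
  have hvol : volume S = ENNReal.ofReal ((r/(2*(n+1)))^n) := by
    rw [hSdef, Real.volume_pi_Ioo]
    simp only [Finset.prod_const, Finset.card_univ, Fintype.card_fin]
    rw [ENNReal.ofReal_pow (by positivity)]
    congr 2; field_simp; ring
  have hgi : ENNReal.ofReal (Real.exp (-b-1)) ≤ ∫⁻ u, g u := by
    rw [hg, lintegral_indicator measurableSet_Ioo]
    calc ENNReal.ofReal (Real.exp (-b-1))
        = ∫⁻ u in Set.Ioo b (b+1), ENNReal.ofReal (Real.exp (-b-1)) := by simp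
      _ ≤ _ := by
        apply setLIntegral_mono (by fun_prop)
        intro u hu
        apply ENNReal.ofReal_le_ofReal
        apply Real.exp_le_exp.2
        linarith [hu.2]
  rw [ENNReal.ofReal_mul (Real.exp_pos _).le, ← hvol]
  refine (mul_le_mul_left hgi _).trans ?_
  rw [← slice_aux n g hgm S hS, expMeasure, withDensity_apply _ hE, ← lintegral_indicator hE]
  apply lintegral_mono
  intro y
  by_cases hy : y ∈ Eset n z r
  · rw [Set.indicator_of_mem hy]
    have hp : ∀ i, 0 ≤ y i := by
      intro i
      have : |z - y i| ≤ ∑ i, |z - y i| :=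
        Finset.single_le_sum (f := fun i => |z - y i|) (fun i _ => abs_nonneg _)
          (Finset.mem_univ _)
      have h := abs_lt.1 (this.trans_lt (hsub hy))
      linarith [h.2]
    simp only [hg]
    rw [Set.indicator_of_mem (show ∑ i, y i ∈ Set.Ioo b (b+1) from hy.1),
      Set.indicator_of_mem (show (fun i : Fin n => y i.succ) ∈ S from hy.2)]
    simp [abs_of_nonneg (hp _)]
  · rw [Set.indicator_of_notMem hy]
    apply le_of_eq
    by_cases h1 : ∑ i, y i ∈ Set.Ioo b (b+1)
    · have h2 : (fun i : Fin n => y i.succ) ∉ S := fun h => hy ⟨h1, h⟩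
      simp only []
      rw [Set.indicator_of_notMem h2, mul_zero]
    · simp only [hg]
      rw [Set.indicator_of_notMem h1, zero_mul]

lemma key_aux (n : ℕ) (K : ℕ) (B : Fin K → Set (Fin (n+1) → ℝ)) (hK : 0 < K)
    (hB : ∀ k, B k ∈ diamondBalls (n+1)) (p : Fin (n+1) → ℝ) (hp : ∀ k, p ∈ B k)
    (A : ℝ) (hA : 0 < A) (hBA : ∀ k, expMeasure (n+1) (B k) ≤ ENNReal.ofReal A)
    (C : ℝ) (hC : 0 < C)
    (hweak : ∀ f : (Fin (n+1) → ℝ) → ℝ, Integrable f (expMeasure (n+1)) →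
        ∀ lam : ℝ, 0 < lam →
          expMeasure (n+1) {x | ENNReal.ofReal lam
              < maximalOp (n+1) (expMeasure (n+1)) (diamondBalls (n+1)) f x}
            ≤ ENNReal.ofReal (C / lam) * ∫⁻ x, ENNReal.ofReal |f x| ∂(expMeasure (n+1))) :
    expMeasure (n+1) (⋃ k, B k) ≤ ENNReal.ofReal (2 * C * A) := by
  set μ := expMeasure (n+1) with hμ
  have hopen : ∀ k, IsOpen (B k) := by
    intro k
    obtain ⟨z, r, hr, h⟩ := hB k
    rw [h]
    exact isOpen_lt (by fun_prop) (by fun_prop)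
  set Q := ⋂ k, B k with hQ
  have hQo : IsOpen Q := isOpen_iInter_of_finite hopen
  have hpQ : p ∈ Q := Set.mem_iInter.2 hp
  have hQs : ∀ k, Q ⊆ B k := fun k => Set.iInter_subset _ k
  have hQm := hQo.measurableSet
  have hQpos : 0 < μ Q := by
    rw [pos_iff_ne_zero]
    intro h0
    rw [hμ, expMeasure, withDensity_apply_eq_zero' (Measurable.aemeasurable (by fun_prop))] at h0
    have : {x : Fin (n+1) → ℝ | ENNReal.ofReal (Real.exp (-∑ i, |x i|)) ≠ 0} = Set.univ := by
      ext x; simp [Real.exp_pos]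
    rw [this, Set.univ_inter] at h0
    exact (hQo.measure_pos volume ⟨p, hpQ⟩).ne' h0
  have hQle : μ Q ≤ ENNReal.ofReal A := (measure_mono (hQs ⟨0, hK⟩)).trans (hBA _)
  have hQfin : μ Q ≠ ∞ := (hQle.trans_lt ENNReal.ofReal_lt_top).ne
  set m := (μ Q).toReal with hm
  have hm0 : 0 < m := ENNReal.toReal_pos hQpos.ne' hQfin
  have hmQ : μ Q = ENNReal.ofReal m := (ENNReal.ofReal_toReal hQfin).symm
  have hf : ∀ x, ENNReal.ofReal |Q.indicator (fun _ => (1:ℝ)) x| = Q.indicator 1 x := by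
    intro x
    by_cases hx : x ∈ Q <;> simp [hx]
  have h := hweak (Q.indicator (fun _ => 1))
    ((integrable_indicator_iff hQm).2 (integrableOn_const hQfin)) (m/(2*A)) (by positivity)
  simp only [hf] at h
  rw [lintegral_indicator_one hQm, hmQ, ← ENNReal.ofReal_mul (by positivity)] at h
  have he : C / (m/(2*A)) * m = 2 * C * A := by field_simp
  rw [he] at h
  refine le_trans (measure_mono ?_) h
  intro x hx
  obtain ⟨k, hk⟩ := Set.mem_iUnion.1 hx
  show ENNReal.ofReal (m/(2*A)) < _
  have hBpos : 0 < μ (B k) := hQpos.trans_le (measure_mono (hQs k))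
  have h1 : ENNReal.ofReal (m/(2*A)) < ENNReal.ofReal (m/A) := by
    rw [ENNReal.ofReal_lt_ofReal_iff (by positivity)]
    apply div_lt_div_of_pos_left hm0 hA; linarith
  refine h1.trans_le ?_
  unfold maximalOp
  refine le_iSup_of_le (B k) (le_iSup_of_le (hB k) (le_iSup_of_le hk (le_iSup_of_le hBpos ?_)))
  simp only [hf]
  rw [lintegral_indicator_one hQm, Measure.restrict_apply hQm, Set.inter_eq_left.2 (hQs k), hmQ,
    ENNReal.ofReal_div_of_pos hA]
  exact ENNReal.div_le_div_left (hBA k) _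

/-- For `d ≥ 2`, the non-centered maximal operator `M_μ^𝓓` associated with the exponential
measure `μ` and the family of open diamonds (ℓ¹ balls) is not of weak type (1,1) w.r.t. `μ`. -/
theorem diamond_maximal_not_weak_type_one_one (d : ℕ) (hd : 2 ≤ d) :
    ¬ ∃ C : ℝ, 0 < C ∧
      ∀ f : (Fin d → ℝ) → ℝ, Integrable f (expMeasure d) →
        ∀ lam : ℝ, 0 < lam →
          expMeasure d {x | ENNReal.ofReal lam
              < maximalOp d (expMeasure d) (diamondBalls d) f x}
            ≤ ENNReal.ofReal (C / lam) * ∫⁻ x, ENNReal.ofReal |f x| ∂(expMeasure d) := by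
  rintro ⟨C, hC, hweak⟩
  obtain ⟨n, rfl⟩ : ∃ n, d = n + 1 := ⟨d - 1, by omega⟩
  have hn1 : 1 ≤ n := by omega
  have hn : (1:ℝ) ≤ n := by exact_mod_cast hn1
  set c : ℝ := Real.exp (-1) * (1/(4*(n+1)))^n with hc
  have hc0 : 0 < c := by positivity
  obtain ⟨K, hKC⟩ := exists_nat_gt (2 * C / c)
  have hKr : (0:ℝ) < K := lt_trans (by positivity) hKC
  have hK : 0 < K := by exact_mod_cast hKr
  set R : ℝ := (n * K + 1 + (n + 1)) * Real.exp K with hR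
  have hR0 : 0 < R := by positivity
  set r : Fin K → ℝ := fun k => R * Real.exp (-(k:ℕ)) with hr
  have hkK : ∀ k : Fin K, ((k:ℕ):ℝ) + 1 ≤ K := fun k => by exact_mod_cast k.2
  have hrl : ∀ k, n * K + 1 + (n + 1) ≤ r k := by
    intro k
    simp only [hr, hR]
    rw [mul_assoc, ← Real.exp_add]
    have : 1 ≤ Real.exp ((K:ℝ) + -((k:ℕ):ℝ)) := Real.one_le_exp (by linarith [hkK k])
    have h0 : (0:ℝ) ≤ n * K + 1 + (n + 1) := by positivity
    nlinarith
  have hrR : ∀ k, r k ≤ R := by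
    intro k
    simp only [hr]
    have : Real.exp (-((k:ℕ):ℝ)) ≤ 1 := Real.exp_le_one_iff.2 (by simp)
    nlinarith
  set L : ℝ := n * K + n * R with hL
  set z : Fin K → ℝ := fun k => (L - n * (k:ℕ) + r k) / (n+1) with hz
  have hn0 : (0:ℝ) < n + 1 := by positivity
  have hzb : ∀ k, (n+1) * z k - r k = L - n * (k:ℕ) := by
    intro k; simp only [hz]; field_simp; ring
  have hrn : ∀ k, r k ^ n = R ^ n * Real.exp (-(n * (k:ℕ))) := by
    intro k
    simp only [hr]
    rw [mul_pow, ← Real.exp_nat_mul]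
    congr 2; ring
  have hzr : ∀ k, r k ≤ z k := by
    intro k
    have h1 := hzb k
    have h2 : n * r k ≤ n * R := mul_le_mul_of_nonneg_left (hrR k) (by linarith)
    have h3 : (n:ℝ) * (k:ℕ) ≤ n * K := mul_le_mul_of_nonneg_left (by linarith [hkK k]) (by linarith)
    have : (n+1) * r k ≤ (n+1) * z k := by linarith
    exact le_of_mul_le_mul_left this hn0
  have hr1 : ∀ k, n + 1 ≤ r k := fun k => by
    have := hrl k
    have : (0:ℝ) ≤ n * K := by positivity
    linarith
  set A : ℝ := Real.exp (-L) * R^n * 2^n with hA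
  set B : Fin K → Set (Fin (n+1) → ℝ) := fun k => {y | ∑ i, |z k - y i| < r k} with hB
  have hmain := key_aux n K B hK (fun k => ⟨fun _ => z k, r k, by linarith [hr1 k], rfl⟩)
    (fun _ => (L+1)/(n+1)) ?_ A (by positivity) ?_ C hC hweak
  rotate_left
  · intro k
    show ∑ i : Fin (n+1), |z k - (L+1)/(n+1)| < r k
    simp only [Finset.sum_const, Finset.card_univ, Fintype.card_fin, nsmul_eq_mul]
    push_cast
    rw [← abs_of_pos hn0, ← abs_mul, abs_of_pos hn0]
    have : ((n:ℝ)+1) * (z k - (L+1)/(n+1)) = r k - n * (k:ℕ) - 1 := by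
      have := hzb k
      have h2 : ((n:ℝ)+1) * ((L+1)/(n+1)) = L + 1 := by field_simp
      rw [mul_sub, h2]; linarith
    rw [this]
    have h3 : (n:ℝ) * (k:ℕ) ≤ n * K := mul_le_mul_of_nonneg_left (by linarith [hkK k]) (by linarith)
    have h4 : (0:ℝ) ≤ n * (k:ℕ) := by positivity
    rw [abs_lt]
    constructor <;> linarith [hrl k]
  · intro k
    refine (upper_aux n (z k) (r k) (by linarith [hr1 k])).trans (ENNReal.ofReal_le_ofReal ?_)
    rw [hzb, mul_pow, hrn, hA]
    have : Real.exp (-(L - n * (k:ℕ))) * Real.exp (-(n * (k:ℕ))) = Real.exp (-L) := by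
      rw [← Real.exp_add]; congr 1; ring
    rw [← this]
    apply le_of_eq; ring
  have hlow : ∀ k, ENNReal.ofReal (c * A) ≤ expMeasure (n+1) (Eset n (z k) (r k)) := by
    intro k
    refine le_trans (ENNReal.ofReal_le_ofReal ?_) (lower_aux n (z k) (r k) (hr1 k) (hzr k))
    rw [hzb, div_pow, hrn, hA, hc]
    have : Real.exp (-(L - n * (k:ℕ)) - 1) * Real.exp (-(n * (k:ℕ)))
        = Real.exp (-1) * Real.exp (-L) := by
      rw [← Real.exp_add, ← Real.exp_add]; congr 1; ring
    have h4 : (4*((n:ℝ)+1))^n = 2^n * (2*((n:ℝ)+1))^n := by rw [← mul_pow]; congr 1; ring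
    apply le_of_eq
    calc Real.exp (-1) * (1/(4*((n:ℝ)+1)))^n * (Real.exp (-L) * R^n * 2^n)
        = (Real.exp (-1) * Real.exp (-L)) * R^n / (2*((n:ℝ)+1))^n := by
          rw [div_pow, h4, one_pow]; field_simp
      _ = _ := by rw [← this]; ring
  have hdisj : Pairwise (Function.onFun Disjoint fun k => Eset n (z k) (r k)) := by
    have hlt : ∀ k l : Fin K, k < l → Disjoint (Eset n (z k) (r k)) (Eset n (z l) (r l)) := by
      intro k l hkl
      rw [Set.disjoint_left]
      rintro y ⟨⟨h1, _⟩, _⟩ ⟨⟨_, h2⟩, _⟩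
      rw [hzb] at h1 h2
      have h3 : ((k:ℕ):ℝ) + 1 ≤ (l:ℕ) := by exact_mod_cast hkl
      nlinarith
    intro k l hkl
    rcases lt_or_gt_of_ne hkl with h | h
    · exact hlt k l h
    · exact (hlt l k h).symm
  have hsum : ENNReal.ofReal (K * (c * A)) ≤ expMeasure (n+1) (⋃ k, B k) := by
    calc ENNReal.ofReal (K * (c * A)) = ∑ k : Fin K, ENNReal.ofReal (c * A) := by
          rw [ENNReal.ofReal_mul (by positivity)]; simp
      _ ≤ ∑ k : Fin K, expMeasure (n+1) (Eset n (z k) (r k)) :=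
          Finset.sum_le_sum fun k _ => hlow k
      _ = expMeasure (n+1) (⋃ k, Eset n (z k) (r k)) := by
          rw [measure_iUnion hdisj (fun k => Eset_meas _ _ _), tsum_fintype]
      _ ≤ _ := measure_mono (Set.iUnion_mono fun k => Eset_sub _ _ _ (hr1 k))
  have hA0 : 0 < A := by positivity
  have := hsum.trans hmain
  rw [ENNReal.ofReal_le_ofReal_iff (by positivity)] at this
  rw [div_lt_iff₀ hc0] at hKC
  nlinarith
end

section
/- Let d ≥ 1 and q ∈ {1, 2, ∞}. The non-centered maximal operator M_μ^{(q)} on ℝ^d (supremum over open ℓ^q balls in ℝ^d) is of weak type (1,1) with respect to (ℝ^d, dμ) if and only if the restricted non-centered maximal operator M_μ^{(q),+} on ℝ^d_+ (supremum over the sets E_q(z,r) = {y ∈ ℝ^d_+ : |z − y|_q < r} with z ∈ ℝ^d_+) is of weak type (1,1) with respect to (ℝ^d_+, dμ). -/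
open MeasureTheory ENNReal

/-- The ℓ¹ norm on `ℝ^d`. -/
noncomputable def l1norm (d : ℕ) (x : Fin d → ℝ) : ℝ := ∑ i, |x i|

/-- The ℓ² (Euclidean) norm on `ℝ^d`. -/
noncomputable def l2norm (d : ℕ) (x : Fin d → ℝ) : ℝ := Real.sqrt (∑ i, (x i) ^ 2)

/-- The ℓ^∞ norm on `ℝ^d` (the sup norm of the pi type). -/
noncomputable def linfnorm (d : ℕ) (x : Fin d → ℝ) : ℝ := ‖x‖

/-- The positive orthant `ℝ^d_+ = (0,∞)^d`. -/
def posOrthant (d : ℕ) : Set (Fin d → ℝ) := {x | ∀ i, 0 < x i}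

/-- The family of open balls `{y : N (z - y) < r}` of `ℝ^d` for the norm `N`. -/
def fullBalls (d : ℕ) (N : (Fin d → ℝ) → ℝ) : Set (Set (Fin d → ℝ)) :=
  {B | ∃ (z : Fin d → ℝ) (r : ℝ), 0 < r ∧ B = {y | N (z - y) < r}}

/-- The family of metric balls `E(z,r) = {y ∈ ℝ^d_+ : N (z - y) < r}`, `z ∈ ℝ^d_+`, of the
subspace `ℝ^d_+` for the norm `N`. -/
def plusBalls (d : ℕ) (N : (Fin d → ℝ) → ℝ) : Set (Set (Fin d → ℝ)) :=
  {B | ∃ (z : Fin d → ℝ) (r : ℝ), z ∈ posOrthant d ∧ 0 < r ∧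
    B = {y | y ∈ posOrthant d ∧ N (z - y) < r}}

/-- coordinatewise sign change -/
noncomputable def sgn {d : ℕ} (σ : Fin d → Bool) (x : Fin d → ℝ) : Fin d → ℝ :=
  fun i => if σ i then x i else - x i

lemma sgn_sgn {d : ℕ} (σ : Fin d → Bool) (x : Fin d → ℝ) : sgn σ (sgn σ x) = x := by
  funext i; simp only [sgn]; split <;> simp

lemma abs_sgn {d : ℕ} (σ : Fin d → Bool) (x : Fin d → ℝ) (i : Fin d) : |sgn σ x i| = |x i| := by
  simp only [sgn]; split <;> simp

lemma exists_sgn {d : ℕ} (z : Fin d → ℝ) : ∃ σ : Fin d → Bool, z = sgn σ (fun i => |z i|) := by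
  classical
  refine ⟨fun i => decide (0 ≤ z i), ?_⟩
  funext i
  by_cases h : 0 ≤ z i
  · simp [sgn, h, abs_of_nonneg h]
  · simp [sgn, h, abs_of_neg (not_le.1 h)]

lemma sgn_sub {d : ℕ} (σ : Fin d → Bool) (x y : Fin d → ℝ) :
    sgn σ x - sgn σ y = sgn σ (x - y) := by
  funext i; simp only [sgn, Pi.sub_apply]; split <;> ring

lemma volume_preserving_sgn {d : ℕ} (σ : Fin d → Bool) :
    MeasurePreserving (sgn σ) (volume : Measure (Fin d → ℝ)) volume := by
  have := volume_preserving_pi (α' := fun _ : Fin d => ℝ) (β' := fun _ : Fin d => ℝ)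
    (f := fun i x => if σ i then x else - x) (by
      intro i
      by_cases h : σ i
      · simp only [h, if_true]; exact MeasurePreserving.id _
      · simp only [h]; exact Measure.measurePreserving_neg _)
  exact this

/-- sign change as a measurable equivalence -/
noncomputable def sgnEquiv {d : ℕ} (σ : Fin d → Bool) : (Fin d → ℝ) ≃ᵐ (Fin d → ℝ) where
  toFun := sgn σ
  invFun := sgn σ
  left_inv := sgn_sgn σ
  right_inv := sgn_sgn σ
  measurable_toFun := (volume_preserving_sgn σ).measurable
  measurable_invFun := (volume_preserving_sgn σ).measurable

lemma sgn_emb {d : ℕ} (σ : Fin d → Bool) : MeasurableEmbedding (sgn σ) :=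
  (sgnEquiv σ).measurableEmbedding

lemma mp_sgn {d : ℕ} (σ : Fin d → Bool) :
    MeasurePreserving (sgn σ) (expMeasure d) (expMeasure d) := by
  refine ⟨(volume_preserving_sgn σ).measurable, ?_⟩
  ext s hs
  rw [(sgn_emb σ).map_apply, expMeasure, withDensity_apply _ hs,
    withDensity_apply _ ((volume_preserving_sgn σ).measurable hs),
    ← (volume_preserving_sgn σ).setLIntegral_comp_preimage_emb (sgn_emb σ) _ s]
  simp only [abs_sgn]

lemma measurableSet_posOrthant (d : ℕ) : MeasurableSet (posOrthant d) := by
  have : posOrthant d = ⋂ i, {x | 0 < x i} := by ext; simp [posOrthant]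
  rw [this]
  exact MeasurableSet.iInter fun i => measurableSet_lt measurable_const (measurable_pi_apply i)

lemma ae_cover (d : ℕ) : ∀ᵐ x ∂(expMeasure d), x ∈ ⋃ σ : Fin d → Bool, sgn σ ⁻¹' posOrthant d := by
  have h : ∀ᵐ x ∂(volume : Measure (Fin d → ℝ)), ∀ i, x i ≠ 0 := by
    rw [ae_all_iff]
    intro i
    have := Measure.ae_eval_ne (μ := fun _ : Fin d => (volume : Measure ℝ)) i 0
    exact this
  have h2 : ∀ᵐ x ∂(expMeasure d), ∀ i, x i ≠ 0 := (withDensity_absolutelyContinuous _ _).ae_le h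
  filter_upwards [h2] with x hx
  obtain ⟨σ, hσ⟩ := exists_sgn x
  refine Set.mem_iUnion.2 ⟨σ, ?_⟩
  rw [hσ, Set.mem_preimage, sgn_sgn]
  intro i
  exact abs_pos.2 (hx i)

lemma cover_measure (d : ℕ) (A : Set (Fin d → ℝ)) :
    expMeasure d A ≤ ∑ σ : Fin d → Bool,
      (expMeasure d).restrict (posOrthant d) (sgn σ ⁻¹' A) := by
  calc expMeasure d A ≤ expMeasure d (⋃ σ : Fin d → Bool, (A ∩ sgn σ ⁻¹' posOrthant d)) := by
        apply measure_mono_ae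
        filter_upwards [ae_cover d] with x hx hA
        rw [← Set.inter_iUnion]
        exact ⟨hA, hx⟩
    _ ≤ ∑ σ : Fin d → Bool, expMeasure d (A ∩ sgn σ ⁻¹' posOrthant d) :=
        measure_iUnion_fintype_le _ _
    _ = _ := by
        refine Finset.sum_congr rfl fun σ _ => ?_
        rw [Measure.restrict_apply' (measurableSet_posOrthant d),
          ← (mp_sgn σ).measure_preimage_emb (sgn_emb σ)]
        congr 1
        ext x
        simp [sgn_sgn]

lemma cover_lintegral (d : ℕ) (G : (Fin d → ℝ) → ℝ≥0∞) :
    ∫⁻ x, G x ∂(expMeasure d) ≤ ∑ σ : Fin d → Bool,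
      ∫⁻ x, G (sgn σ x) ∂((expMeasure d).restrict (posOrthant d)) := by
  calc ∫⁻ x, G x ∂(expMeasure d)
      = ∫⁻ x in ⋃ σ : Fin d → Bool, sgn σ ⁻¹' posOrthant d, G x ∂(expMeasure d) := by
        rw [Measure.restrict_eq_self_of_ae_mem (ae_cover d)]
    _ ≤ ∑' σ : Fin d → Bool, ∫⁻ x in sgn σ ⁻¹' posOrthant d, G x ∂(expMeasure d) :=
        lintegral_iUnion_le _ _
    _ = _ := by
        rw [tsum_fintype]
        refine Finset.sum_congr rfl fun σ _ => ?_
        rw [← (mp_sgn σ).setLIntegral_comp_preimage_emb (sgn_emb σ)]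
        congr 2
        ext x
        simp [sgn_sgn]

/-- The properties of the norm used in the proof. -/
structure GoodNorm (d : ℕ) (N : (Fin d → ℝ) → ℝ) : Prop where
  mono : ∀ x y : Fin d → ℝ, (∀ i, |x i| ≤ |y i|) → N x ≤ N y
  tri : ∀ x y, N (x + y) ≤ N x + N y
  smul : ∀ (c : ℝ) x, 0 ≤ c → N (c • x) = c * N x
  cont : Continuous N

lemma goodNorm {d : ℕ} {N : (Fin d → ℝ) → ℝ}
    (hN : N = l1norm d ∨ N = l2norm d ∨ N = linfnorm d) : GoodNorm d N := by
  rcases hN with rfl | rfl | rfl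
  · refine ⟨fun x y h => Finset.sum_le_sum fun i _ => h i, fun x y => ?_, fun c x hc => ?_, ?_⟩
    · simp only [l1norm, ← Finset.sum_add_distrib]
      exact Finset.sum_le_sum fun i _ => abs_add_le _ _
    · simp [l1norm, Finset.mul_sum, abs_mul, abs_of_nonneg hc]
    · unfold l1norm; fun_prop
  · have key : ∀ x, l2norm d x = ‖WithLp.toLp 2 x‖ := by
      intro x; simp [l2norm, EuclideanSpace.norm_eq]
    refine ⟨fun x y h => ?_, fun x y => ?_, fun c x hc => ?_, ?_⟩
    · exact Real.sqrt_le_sqrt (Finset.sum_le_sum fun i _ => sq_le_sq.2 (h i))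
    · simp only [key, WithLp.toLp_add]; exact norm_add_le _ _
    · simp only [key, WithLp.toLp_smul, norm_smul, Real.norm_eq_abs, abs_of_nonneg hc]
    · unfold l2norm; fun_prop
  · refine ⟨fun x y h => ?_, fun x y => norm_add_le _ _, fun c x hc => ?_, continuous_norm⟩
    · refine (pi_norm_le_iff_of_nonneg (norm_nonneg _)).2 fun i => (h i).trans (norm_le_pi_norm y i)
    · simp [linfnorm, norm_smul, abs_of_nonneg hc]

lemma GoodNorm.sgn {d : ℕ} {N : (Fin d → ℝ) → ℝ} (h : GoodNorm d N) (σ : Fin d → Bool)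
    (x : Fin d → ℝ) : N (sgn σ x) = N x :=
  le_antisymm (h.mono _ _ fun i => (abs_sgn σ x i).le) (h.mono _ _ fun i => (abs_sgn σ x i).ge)

/-- Folding does not increase distances. -/
lemma GoodNorm.fold {d : ℕ} {N : (Fin d → ℝ) → ℝ} (h : GoodNorm d N) (σ : Fin d → Bool)
    (z y : Fin d → ℝ) (hy : y ∈ posOrthant d) :
    N ((fun i => |z i|) - y) ≤ N (z - _root_.sgn σ y) := by
  refine h.mono _ _ fun i => ?_
  have h1 : |y i| = y i := abs_of_pos (hy i)
  have := abs_abs_sub_abs_le_abs_sub (z i) (_root_.sgn σ y i)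
  rw [abs_sgn, h1] at this
  exact this

lemma lt_maxOp_iff {d : ℕ} {μ : Measure (Fin d → ℝ)} {F : Set (Set (Fin d → ℝ))}
    {f : (Fin d → ℝ) → ℝ} {x : Fin d → ℝ} {a : ℝ≥0∞} :
    a < maximalOp d μ F f x ↔ ∃ B ∈ F, x ∈ B ∧ 0 < μ B ∧
      a < (∫⁻ y in B, ENNReal.ofReal |f y| ∂μ) / μ B := by
  simp only [maximalOp, lt_iSup_iff, exists_prop]

lemma lt_maxOp_of {d : ℕ} {μ : Measure (Fin d → ℝ)} {F : Set (Set (Fin d → ℝ))}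
    {f : (Fin d → ℝ) → ℝ} {x : Fin d → ℝ} {a : ℝ≥0∞} (ha : a ≠ 0) (B : Set (Fin d → ℝ))
    (hB : B ∈ F) (hx : x ∈ B) (h : a * μ B < ∫⁻ y in B, ENNReal.ofReal |f y| ∂μ) :
    a < maximalOp d μ F f x := by
  have h0 : μ B ≠ 0 := by
    intro h0
    rw [Measure.restrict_eq_zero.2 h0] at h
    simp at h
  have ht : μ B ≠ ⊤ := by
    intro ht
    rw [ht, ENNReal.mul_top ha] at h
    exact not_top_lt h
  exact lt_maxOp_iff.2 ⟨B, hB, hx, pos_iff_ne_zero.2 h0,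
    (ENNReal.lt_div_iff_mul_lt (Or.inl h0) (Or.inl ht)).2 h⟩

/-- Approximation of folded balls from inside by balls centered in the open orthant. -/
lemma approx {d : ℕ} {N : (Fin d → ℝ) → ℝ} (h : GoodNorm d N) (f : (Fin d → ℝ) → ℝ)
    (μ : Measure (Fin d → ℝ)) (z : Fin d → ℝ) (hz : ∀ i, 0 ≤ z i) (r : ℝ)
    (y : Fin d → ℝ) (hy : y ∈ posOrthant d) (hyr : N (z - y) < r) (a : ℝ≥0∞) (ha : a ≠ 0)
    (hlt : a * μ {y | y ∈ posOrthant d ∧ N (z - y) < r} <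
      ∫⁻ y in {y | y ∈ posOrthant d ∧ N (z - y) < r}, ENNReal.ofReal |f y| ∂μ) :
    a < maximalOp d μ (plusBalls d N) f y := by
  set e : ℕ → ℝ := fun n => 1 / ((n : ℝ) + 1) with he
  have hepos : ∀ n, 0 < e n := fun n => Nat.one_div_pos_of_nat
  set o : Fin d → ℝ := fun _ => 1 with ho
  set E : ℕ → Set (Fin d → ℝ) :=
    fun n => {y | y ∈ posOrthant d ∧ N (z + e n • o - y) < r - e n * N o} with hE
  have hmeas : ∀ w s, MeasurableSet {y | y ∈ posOrthant d ∧ N (w - y) < s} := fun w s =>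
    (measurableSet_posOrthant d).inter
      (measurableSet_lt (h.cont.comp (continuous_const.sub continuous_id)).measurable
        measurable_const)
  have hmono : Monotone E := by
    intro n m hnm x hx
    have hem : e m ≤ e n := Nat.one_div_le_one_div hnm
    refine ⟨hx.1, ?_⟩
    have hx2 := hx.2
    have h1 := h.tri (z + e n • o - x) ((e n - e m) • sgn (fun _ => false) o)
    rw [h.smul _ _ (sub_nonneg.2 hem), h.sgn] at h1
    have h2 : (z + e n • o - x) + ((e n - e m) • sgn (fun _ => false) o) = z + e m • o - x := by
      funext i; simp [sgn, ho]; ring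
    rw [h2] at h1
    linarith
  have hlim : ∀ x ∈ posOrthant d, N (z - x) < r → ∀ᶠ n in Filter.atTop, x ∈ E n := by
    intro x hx hxr
    have het : Filter.Tendsto e Filter.atTop (nhds 0) := tendsto_one_div_add_atTop_nhds_zero_nat
    have hc : Continuous fun t : ℝ => N (z + t • o - x) + t * N o := by
      have := h.cont
      fun_prop
    have := (hc.tendsto 0).comp het
    simp only [zero_smul, add_zero, zero_mul] at this
    filter_upwards [this.eventually (gt_mem_nhds hxr)] with n hn
    refine ⟨hx, ?_⟩
    simp only [Function.comp] at hn
    linarith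
  have hsub : ∀ n, E n ⊆ {y | y ∈ posOrthant d ∧ N (z - y) < r} := by
    intro n x hx
    refine ⟨hx.1, ?_⟩
    have hx2 := hx.2
    have h1 := h.tri (z + e n • o - x) (e n • sgn (fun _ => false) o)
    rw [h.smul _ _ (hepos n).le, h.sgn] at h1
    have h2 : (z + e n • o - x) + (e n • sgn (fun _ => false) o) = z - x := by
      funext i; simp [sgn, ho]; ring
    rw [h2] at h1
    linarith
  have hU : ⋃ n, E n = {y | y ∈ posOrthant d ∧ N (z - y) < r} := by
    refine Set.Subset.antisymm (Set.iUnion_subset hsub) fun x hx => ?_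
    obtain ⟨n, hn⟩ := (hlim x hx.1 hx.2).exists
    exact Set.mem_iUnion.2 ⟨n, hn⟩
  have ht := tendsto_measure_iUnion_atTop (μ := μ.withDensity fun y => ENNReal.ofReal |f y|) hmono
  rw [hU, withDensity_apply _ (hmeas z r)] at ht
  obtain ⟨n, hn1, hn2⟩ := ((ht.eventually (lt_mem_nhds hlt)).and (hlim y hy hyr)).exists
  simp only [Function.comp] at hn1
  rw [withDensity_apply _ (hmeas _ _)] at hn1
  refine lt_maxOp_of ha (E n) ⟨z + e n • o, r - e n * N o, ?_, ?_, rfl⟩ hn2 ?_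
  · intro i
    simp only [ho, Pi.add_apply, Pi.smul_apply, smul_eq_mul, mul_one]
    linarith [hz i, hepos n]
  · have h0 : N 0 = 0 := by simpa using h.smul 0 0 le_rfl
    have := h.mono 0 (z + e n • o - y) (by simp)
    linarith [hn2.2]
  · exact lt_of_le_of_lt (mul_le_mul_right (measure_mono (hsub n)) _) hn1

lemma step_back {d : ℕ} {N : (Fin d → ℝ) → ℝ} (h : GoodNorm d N) (f : (Fin d → ℝ) → ℝ)
    (hf : AEMeasurable f (expMeasure d)) (a : ℝ≥0∞) (ha : a ≠ 0)
    (σ : Fin d → Bool) (y : Fin d → ℝ) (hy : y ∈ posOrthant d)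
    (hlt : a < maximalOp d (expMeasure d) (fullBalls d N) f (sgn σ y)) :
    a < maximalOp d ((expMeasure d).restrict (posOrthant d)) (plusBalls d N)
      (fun x => ∑ τ : Fin d → Bool, |f (sgn τ x)|) y := by
  obtain ⟨B, ⟨z, r, hr, rfl⟩, hx, -, hlt⟩ := lt_maxOp_iff.1 hlt
  have hlt := ENNReal.mul_lt_of_lt_div hlt
  set P := posOrthant d with hP
  have hPm : MeasurableSet P := measurableSet_posOrthant d
  set w : Fin d → ℝ := fun i => |z i| with hw
  set E := {y | y ∈ P ∧ N (w - y) < r} with hE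
  have hcb : ∀ v : Fin d → ℝ, MeasurableSet {y | N (v - y) < r} := fun v =>
    measurableSet_lt (h.cont.comp (continuous_const.sub continuous_id)).measurable
        measurable_const
  have hEm : MeasurableSet E := hPm.inter (hcb w)
  refine approx h _ _ w (fun i => abs_nonneg _) r y hy ((h.fold σ z y hy).trans_lt hx) a ha ?_
  have hμ : (expMeasure d).restrict P E ≤ expMeasure d {y | N (z - y) < r} := by
    obtain ⟨τ, hτ⟩ := exists_sgn z
    refine (Measure.restrict_apply_le _ _).trans ?_
    rw [← (mp_sgn τ).measure_preimage_emb (sgn_emb τ) {y | N (z - y) < r}]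
    refine measure_mono fun x hx => ?_
    have := hx.2
    change N (z - sgn τ x) < r
    rw [hτ, sgn_sub, h.sgn]
    exact this
  refine lt_of_le_of_lt (mul_le_mul_right hμ _) (hlt.trans_le ?_)
  rw [← lintegral_indicator (hcb z)]
  refine (cover_lintegral d _).trans ?_
  have hsum : ∀ x, ENNReal.ofReal |(∑ τ : Fin d → Bool, |f (sgn τ x)|)| =
      ∑ τ : Fin d → Bool, ENNReal.ofReal |f (sgn τ x)| := by
    intro x
    rw [abs_of_nonneg (Finset.sum_nonneg fun _ _ => abs_nonneg _),
      ENNReal.ofReal_sum_of_nonneg fun _ _ => abs_nonneg _]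
  simp only [hsum]
  have hfm : ∀ τ : Fin d → Bool, AEMeasurable (fun x => ENNReal.ofReal |f (sgn τ x)|)
      (expMeasure d) := fun τ =>
    ((hf.comp_quasiMeasurePreserving (mp_sgn τ).quasiMeasurePreserving).abs).ennreal_ofReal
  rw [lintegral_finsetSum' _ fun τ _ => (hfm τ).restrict.restrict]
  refine Finset.sum_le_sum fun τ _ => ?_
  rw [← lintegral_indicator hEm]
  refine lintegral_mono_ae ?_
  filter_upwards [ae_restrict_mem hPm] with x hxP
  by_cases hxB : N (z - sgn τ x) < r
  · have : x ∈ E := ⟨hxP, (h.fold τ z x hxP).trans_lt hxB⟩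
    rw [Set.indicator_of_mem this, Set.indicator_of_mem (by exact hxB)]
  · rw [Set.indicator_of_notMem (by exact hxB)]
    exact zero_le

lemma step_forth {d : ℕ} {N : (Fin d → ℝ) → ℝ} (h : GoodNorm d N) (f : (Fin d → ℝ) → ℝ)
    (a : ℝ≥0∞) (ha : a ≠ 0) (y : Fin d → ℝ)
    (hlt : 2 ^ d * a < maximalOp d ((expMeasure d).restrict (posOrthant d)) (plusBalls d N) f y) :
    a < maximalOp d (expMeasure d) (fullBalls d N) ((posOrthant d).indicator f) y := by
  obtain ⟨B, ⟨z, r, hz, hr, rfl⟩, hx, -, hlt⟩ := lt_maxOp_iff.1 hlt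
  have hlt := ENNReal.mul_lt_of_lt_div hlt
  have hcb : MeasurableSet {y | N (z - y) < r} :=
    measurableSet_lt (h.cont.comp (continuous_const.sub continuous_id)).measurable
        measurable_const
  refine lt_maxOp_of ha {y | N (z - y) < r} ⟨z, r, hr, rfl⟩ hx.2 ?_
  set P := posOrthant d with hP
  have hPm : MeasurableSet P := measurableSet_posOrthant d
  set E := {y | y ∈ P ∧ N (z - y) < r} with hE
  have hμ : expMeasure d {y | N (z - y) < r} ≤ 2 ^ d * (expMeasure d).restrict P E := by
    refine (cover_measure d _).trans ?_
    have : ∀ σ ∈ (Finset.univ : Finset (Fin d → Bool)),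
        (expMeasure d).restrict (posOrthant d) (sgn σ ⁻¹' {y | N (z - y) < r}) ≤
          (expMeasure d).restrict P E := by
      intro σ _
      refine measure_mono_ae ?_
      filter_upwards [ae_restrict_mem hPm] with x hxP hxB
      refine ⟨hxP, ?_⟩
      have h1 := (h.fold σ z x hxP).trans_lt hxB
      have h2 : (fun i => |z i|) = z := funext fun i => abs_of_pos (hz i)
      rwa [h2] at h1
    refine (Finset.sum_le_card_nsmul _ _ _ this).trans ?_
    simp
  calc a * expMeasure d {y | N (z - y) < r} ≤ a * (2 ^ d * (expMeasure d).restrict P E) :=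
        mul_le_mul_right hμ _
    _ = 2 ^ d * a * (expMeasure d).restrict P E := by ring
    _ < _ := hlt
    _ ≤ ∫⁻ y in {y | N (z - y) < r}, ENNReal.ofReal |f y| ∂((expMeasure d).restrict P) :=
        lintegral_mono_set fun x hx => hx.2
    _ = _ := by
        rw [Measure.restrict_restrict hcb, Set.inter_comm, ← Measure.restrict_restrict hPm,
          ← lintegral_indicator hPm]
        congr 1
        funext x
        by_cases hx : x ∈ P <;> simp [hx]

/-- For `d ≥ 1` and `q ∈ {1,2,∞}`, the non-centered maximal operator over open ℓ^q balls of
`ℝ^d` is of weak type (1,1) w.r.t. `(ℝ^d, dμ)` iff the restricted non-centered maximal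
operator over the ℓ^q metric balls of `ℝ^d_+` is of weak type (1,1) w.r.t. `(ℝ^d_+, dμ)`. -/
theorem maximal_weak_type_iff_restricted (d : ℕ) (hd : 1 ≤ d)
    (N : (Fin d → ℝ) → ℝ)
    (hN : N = l1norm d ∨ N = l2norm d ∨ N = linfnorm d) :
    (∃ C : ℝ, 0 < C ∧
      ∀ f : (Fin d → ℝ) → ℝ, Integrable f (expMeasure d) →
        ∀ lam : ℝ, 0 < lam →
          expMeasure d {x | ENNReal.ofReal lam
              < maximalOp d (expMeasure d) (fullBalls d N) f x}
            ≤ ENNReal.ofReal (C / lam) * ∫⁻ x, ENNReal.ofReal |f x| ∂(expMeasure d))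
    ↔
    (∃ C : ℝ, 0 < C ∧
      ∀ f : (Fin d → ℝ) → ℝ, Integrable f ((expMeasure d).restrict (posOrthant d)) →
        ∀ lam : ℝ, 0 < lam →
          (expMeasure d).restrict (posOrthant d) {x | ENNReal.ofReal lam
              < maximalOp d ((expMeasure d).restrict (posOrthant d)) (plusBalls d N) f x}
            ≤ ENNReal.ofReal (C / lam)
              * ∫⁻ x, ENNReal.ofReal |f x| ∂((expMeasure d).restrict (posOrthant d))) := by

  have h := goodNorm hN
  have hPm : MeasurableSet (posOrthant d) := measurableSet_posOrthant d
  constructor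
  · rintro ⟨C, hC, H⟩
    refine ⟨C * 2 ^ d, by positivity, fun f hf lam hlam => ?_⟩
    have hl : 0 < lam / 2 ^ d := by positivity
    have hlm : ENNReal.ofReal lam = 2 ^ d * ENNReal.ofReal (lam / 2 ^ d) := by
      have : (2 : ℝ≥0∞) ^ d = ENNReal.ofReal (2 ^ d) := by
        rw [ENNReal.ofReal_pow (by norm_num)]; simp
      rw [this, ← ENNReal.ofReal_mul (by positivity)]
      congr 1
      field_simp
    have H1 := H ((posOrthant d).indicator f) ((integrable_indicator_iff hPm).2 hf) _ hl
    have e1 : C / (lam / 2 ^ d) = C * 2 ^ d / lam := by field_simp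
    have e2 : ∫⁻ x, ENNReal.ofReal |(posOrthant d).indicator f x| ∂(expMeasure d) =
        ∫⁻ x, ENNReal.ofReal |f x| ∂((expMeasure d).restrict (posOrthant d)) := by
      rw [← lintegral_indicator hPm]
      congr 1
      funext x
      by_cases hx : x ∈ posOrthant d <;> simp [hx]
    rw [e1, e2] at H1
    refine ((Measure.restrict_apply_le _ _).trans (measure_mono fun x hx => ?_)).trans H1
    refine step_forth h f _ (ENNReal.ofReal_pos.2 hl).ne' x ?_
    rw [← hlm]
    exact hx
  · rintro ⟨C, hC, H⟩
    refine ⟨2 ^ d * (C * 2 ^ d), by positivity, fun f hf lam hlam => ?_⟩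
    have hfi : ∀ τ : Fin d → Bool, Integrable (fun x => |f (sgn τ x)|) (expMeasure d) :=
      fun τ => ((mp_sgn τ).integrable_comp_of_integrable hf).abs
    have hF : Integrable (fun x => ∑ τ : Fin d → Bool, |f (sgn τ x)|) (expMeasure d) :=
      integrable_finsetSum _ fun τ _ => hfi τ
    have H1 := H _ hF.restrict lam hlam
    have e2 : ∫⁻ x, ENNReal.ofReal |(∑ τ : Fin d → Bool, |f (sgn τ x)|)|
        ∂((expMeasure d).restrict (posOrthant d)) ≤
        2 ^ d * ∫⁻ x, ENNReal.ofReal |f x| ∂(expMeasure d) := by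
      refine (lintegral_mono' Measure.restrict_le_self le_rfl).trans ?_
      have hsum : ∀ x, ENNReal.ofReal |(∑ τ : Fin d → Bool, |f (sgn τ x)|)| =
          ∑ τ : Fin d → Bool, ENNReal.ofReal |f (sgn τ x)| := by
        intro x
        rw [abs_of_nonneg (Finset.sum_nonneg fun _ _ => abs_nonneg _),
          ENNReal.ofReal_sum_of_nonneg fun _ _ => abs_nonneg _]
      simp only [hsum]
      rw [lintegral_finsetSum' _ fun τ _ => (hfi τ).aemeasurable.ennreal_ofReal]
      have : ∀ τ : Fin d → Bool, ∫⁻ x, ENNReal.ofReal |f (sgn τ x)| ∂(expMeasure d) =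
          ∫⁻ x, ENNReal.ofReal |f x| ∂(expMeasure d) := fun τ =>
        (mp_sgn τ).lintegral_comp_emb (sgn_emb τ) (fun x => ENNReal.ofReal |f x|)
      simp [this]
    refine (cover_measure d _).trans ?_
    have hs : ∀ σ ∈ (Finset.univ : Finset (Fin d → Bool)),
        (expMeasure d).restrict (posOrthant d) (sgn σ ⁻¹' {x | ENNReal.ofReal lam
              < maximalOp d (expMeasure d) (fullBalls d N) f x}) ≤
        ENNReal.ofReal (C / lam) * (2 ^ d * ∫⁻ x, ENNReal.ofReal |f x| ∂(expMeasure d)) := by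
      intro σ _
      refine le_trans (measure_mono_ae ?_) (H1.trans (mul_le_mul_right e2 _))
      filter_upwards [ae_restrict_mem hPm] with x hxP hx
      exact step_back h f hf.aemeasurable _ (ENNReal.ofReal_pos.2 hlam).ne' σ x hxP hx
    refine (Finset.sum_le_card_nsmul _ _ _ hs).trans (le_of_eq ?_)
    have e3 : ENNReal.ofReal (2 ^ d * (C * 2 ^ d) / lam) =
        2 ^ d * ENNReal.ofReal (C / lam) * 2 ^ d := by
      have h2 : (2 : ℝ≥0∞) ^ d = ENNReal.ofReal (2 ^ d) := by
        rw [ENNReal.ofReal_pow (by norm_num)]; simp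
      rw [h2, ← ENNReal.ofReal_mul (by positivity), ← ENNReal.ofReal_mul (by positivity)]
      congr 1
      ring
    rw [e3]
    simp only [Finset.card_univ, Fintype.card_fun, Fintype.card_bool, Fintype.card_fin,
      nsmul_eq_mul, Nat.cast_pow, Nat.cast_ofNat]
    ring
end

section
/- Let d ≥ 1 and q ∈ {1, 2, ∞}. For every R > 0 there exists a constant C_R > 0 such that μ(E_q(x, 2r)) ≤ C_R · μ(E_q(x, r)) for all x ∈ ℝ^d_+ and all 0 < r ≤ R, where E_q(x,r) = {y ∈ ℝ^d_+ : |x − y|_q < r}. In other words, the measure μ is locally doubling on the metric measure space (ℝ^d_+, ℓ^q metric, μ). -/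
open MeasureTheory ENNReal

/-- The metric ball `E_q(x,r) = {y ∈ ℝ^d_+ : |x - y|_q < r}` of the subspace `ℝ^d_+`. -/
def ballPlus (d : ℕ) (N : (Fin d → ℝ) → ℝ) (x : Fin d → ℝ) (r : ℝ) : Set (Fin d → ℝ) :=
  {y | (∀ i, 0 < y i) ∧ N (x - y) < r}

theorem aux_norm (d : ℕ) (hd : 1 ≤ d) (N : (Fin d → ℝ) → ℝ)
    (hN : N = l1norm d ∨ N = l2norm d ∨ N = linfnorm d) (z : Fin d → ℝ) :
    (∀ i, |z i| ≤ N z) ∧ ∀ c, 0 ≤ c → (∀ i, |z i| ≤ c) → N z ≤ d * c := by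
  have h1d : (1 : ℝ) ≤ d := by exact_mod_cast hd
  rcases hN with rfl | rfl | rfl
  · refine ⟨fun i => ?_, fun c hc h => ?_⟩
    · exact Finset.single_le_sum (f := fun i => |z i|) (fun j _ => abs_nonneg _)
        (Finset.mem_univ i)
    · have := Finset.sum_le_sum (s := Finset.univ) (fun i _ => h i)
      simpa [l1norm] using this
  · refine ⟨fun i => ?_, fun c hc h => ?_⟩
    · apply Real.abs_le_sqrt
      exact Finset.single_le_sum (f := fun i => (z i) ^ 2) (fun j _ => sq_nonneg _)
        (Finset.mem_univ i)
    · apply Real.sqrt_le_iff.mpr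
      refine ⟨by positivity, ?_⟩
      have h2 : ∑ i, (z i) ^ 2 ≤ ∑ _i : Fin d, c ^ 2 := by
        apply Finset.sum_le_sum
        intro i _
        exact sq_le_sq' (abs_le.mp (h i)).1 (abs_le.mp (h i)).2
      simp only [Finset.sum_const, Finset.card_univ, Fintype.card_fin, nsmul_eq_mul] at h2
      nlinarith [sq_nonneg c, mul_nonneg (mul_nonneg (sub_nonneg.mpr h1d) (sq_nonneg c))
        (zero_le_one.trans h1d)]
  · refine ⟨fun i => ?_, fun c hc h => ?_⟩
    · exact norm_le_pi_norm z i
    · have : ‖z‖ ≤ c := (pi_norm_le_iff_of_nonneg hc).mpr h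
      unfold linfnorm
      nlinarith

/-- For `d ≥ 1` and `q ∈ {1,2,∞}`, the measure `μ` is locally doubling on
`(ℝ^d_+, ℓ^q metric, μ)`: for every `R > 0` there is `C_R > 0` with
`μ(E_q(x,2r)) ≤ C_R μ(E_q(x,r))` for all `x ∈ ℝ^d_+` and `0 < r ≤ R`. -/
theorem expMeasure_locally_doubling (d : ℕ) (hd : 1 ≤ d)
    (N : (Fin d → ℝ) → ℝ)
    (hN : N = l1norm d ∨ N = l2norm d ∨ N = linfnorm d) :
    ∀ R : ℝ, 0 < R → ∃ C : ℝ, 0 < C ∧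
      ∀ x : Fin d → ℝ, (∀ i, 0 < x i) → ∀ r : ℝ, 0 < r → r ≤ R →
        expMeasure d (ballPlus d N x (2 * r))
          ≤ ENNReal.ofReal C * expMeasure d (ballPlus d N x r) := by
  intro R hR
  have h1d : (1 : ℝ) ≤ d := by exact_mod_cast hd
  have hd0 : (0 : ℝ) < d := by linarith
  refine ⟨(8 * d) ^ d * Real.exp (3 * d * R), by positivity, ?_⟩
  intro x hx r hr hrR
  set S : ℝ := ∑ i, x i with hS
  have hup : expMeasure d (ballPlus d N x (2 * r))
      ≤ ENNReal.ofReal (Real.exp (-S + d * (2 * r)) * (4 * r) ^ d) := by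
    have hsub : ballPlus d N x (2 * r) ⊆
        Set.Icc (fun i => x i - 2 * r) (fun i => x i + 2 * r) := by
      rintro y ⟨-, hy⟩
      have h := (aux_norm d hd N hN (x - y)).1
      refine ⟨fun i => ?_, fun i => ?_⟩ <;>
      · have := abs_le.mp ((h i).trans hy.le)
        simp only [Pi.sub_apply] at this
        dsimp only
        linarith [this.1, this.2]
    refine (measure_mono hsub).trans ?_
    rw [expMeasure, withDensity_apply _ measurableSet_Icc]
    refine (setLIntegral_mono (g := fun _ => ENNReal.ofReal (Real.exp (-S + d * (2 * r))))
      measurable_const ?_).trans ?_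
    · intro y hy
      apply ENNReal.ofReal_le_ofReal
      apply Real.exp_le_exp.mpr
      have : ∑ i, (x i - 2 * r) ≤ ∑ i, |y i| :=
        Finset.sum_le_sum fun i _ => (hy.1 i).trans (le_abs_self _)
      rw [Finset.sum_sub_distrib] at this
      simp only [Finset.sum_const, Finset.card_univ, Fintype.card_fin, nsmul_eq_mul] at this
      linarith
    · rw [setLIntegral_const, Real.volume_Icc_pi, ENNReal.ofReal_mul (Real.exp_nonneg _)]
      have : ∀ i, x i + 2 * r - (x i - 2 * r) = 4 * r := fun i => by ring
      simp only [this, Finset.prod_const, Finset.card_univ, Fintype.card_fin]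
      rw [ENNReal.ofReal_pow (by positivity)]
  have hlow : ENNReal.ofReal (Real.exp (-S - d * r) * (r / (2 * d)) ^ d)
      ≤ expMeasure d (ballPlus d N x r) := by
    have hc : 0 < r / (2 * d) := by positivity
    have hcr : r / (2 * d) ≤ r := by
      apply div_le_self hr.le
      linarith
    have hsub : Set.Icc x (fun i => x i + r / (2 * d)) ⊆ ballPlus d N x r := by
      intro y hy
      refine ⟨fun i => (hx i).trans_le (hy.1 i), ?_⟩
      have h := (aux_norm d hd N hN (x - y)).2 (r / (2 * d)) hc.le (fun i => by
        have h1 := hy.1 i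
        have h2 := hy.2 i
        dsimp only at h2
        simp only [Pi.sub_apply]
        apply abs_le.mpr
        constructor <;> linarith)
      have h3 : d * (r / (2 * d)) = r / 2 := by field_simp
      linarith
    refine le_trans ?_ (measure_mono hsub)
    rw [expMeasure, withDensity_apply _ measurableSet_Icc]
    refine le_trans ?_ (setLIntegral_mono' (f := fun _ => ENNReal.ofReal (Real.exp (-S - d * r)))
      measurableSet_Icc ?_)
    · rw [setLIntegral_const, Real.volume_Icc_pi, ENNReal.ofReal_mul (Real.exp_nonneg _)]
      simp only [add_sub_cancel_left, Finset.prod_const, Finset.card_univ, Fintype.card_fin]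
      rw [ENNReal.ofReal_pow (by positivity)]
    · intro y hy
      apply ENNReal.ofReal_le_ofReal
      apply Real.exp_le_exp.mpr
      have : ∑ i, |y i| ≤ ∑ i, (x i + r) := Finset.sum_le_sum fun i _ => by
        have h1 := hy.1 i
        have h2 := hy.2 i
        dsimp only at h2
        rw [abs_of_pos ((hx i).trans_le h1)]
        linarith
      rw [Finset.sum_add_distrib] at this
      simp only [Finset.sum_const, Finset.card_univ, Fintype.card_fin, nsmul_eq_mul] at this
      linarith
  refine hup.trans (le_trans ?_ (mul_le_mul_right hlow _))
  rw [← ENNReal.ofReal_mul (by positivity)]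
  apply ENNReal.ofReal_le_ofReal
  have e1 : (4 * r) ^ d = (8 * d) ^ d * (r / (2 * d)) ^ d := by
    rw [← mul_pow]
    congr 1
    field_simp
    ring
  have e2 : Real.exp (-S + d * (2 * r)) ≤ Real.exp (3 * d * R) * Real.exp (-S - d * r) := by
    rw [← Real.exp_add]
    apply Real.exp_le_exp.mpr
    nlinarith
  calc Real.exp (-S + d * (2 * r)) * (4 * r) ^ d
      ≤ (Real.exp (3 * d * R) * Real.exp (-S - d * r)) * (4 * r) ^ d := by gcongr
    _ = _ := by
      rw [e1]
      ring
end

section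
/- Let d ≥ 1. There exist constants c, C > 0 depending only on d such that for all x ∈ ℝ^d_+ and all r with 1 ≤ r ≤ min_{1 ≤ i ≤ d} xᵢ, the Euclidean ball B(x,r) = {y ∈ ℝ^d_+ : |x − y|₂ < r} is contained in ℝ^d_+ and c · exp(−(|x|₁ − √d · r)) · r^{(d−1)/2} ≤ μ(B(x,r)) ≤ C · exp(−(|x|₁ − √d · r)) · r^{(d−1)/2}, where |x|₁ = x₁ + ⋯ + x_d. -/
open MeasureTheory ENNReal

lemma shear_lintegral (n : ℕ) (F : (Fin (n+1) → ℝ) → ℝ≥0∞) (hF : Measurable F)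
    (p : Fin (n+1) → ℝ) :
    ∫⁻ y, F y = ∫⁻ w : Fin n → ℝ, ∫⁻ s : ℝ,
      F (Fin.cons (p 0 + (s - ∑ i, w i)) (fun i => p i.succ + w i)) := by
  have h1 := (volume_preserving_piFinSuccAbove (fun _ : Fin (n+1) => ℝ) 0).symm.lintegral_comp hF
  rw [← h1]
  have hm : Measurable fun z : ℝ × (Fin n → ℝ) =>
      F ((MeasurableEquiv.piFinSuccAbove (fun _ : Fin (n+1) => ℝ) 0).symm z) :=
    hF.comp (MeasurableEquiv.measurable _)
  rw [Measure.volume_eq_prod, lintegral_prod_symm _ hm.aemeasurable]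
  rw [← lintegral_add_left_eq_self _ (fun i : Fin n => p i.succ)]
  refine lintegral_congr fun w => ?_
  rw [← lintegral_add_left_eq_self _ (p 0 - ∑ i, w i)]
  refine lintegral_congr fun s => ?_
  congr 1
  have : p 0 - ∑ i, w i + s = p 0 + (s - ∑ i, w i) := by ring
  rw [this]
  simp [MeasurableEquiv.piFinSuccAbove, Fin.insertNthEquiv]
  rfl

lemma euc_ball_subset (d : ℕ) (x : Fin d → ℝ) (r : ℝ) (hx : ∀ i, r ≤ x i) :
    {y : Fin d → ℝ | √(∑ i, (x i - y i)^2) < r} ⊆ {y | ∀ i, 0 < y i} := by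
  intro y hy i
  have h1 : (x i - y i)^2 ≤ ∑ i, (x i - y i)^2 :=
    Finset.single_le_sum (f := fun i => (x i - y i)^2) (fun j _ => sq_nonneg _) (Finset.mem_univ i)
  have h2 := Real.sqrt_le_sqrt h1
  rw [Real.sqrt_sq_eq_abs] at h2
  have h3 := le_abs_self (x i - y i)
  have h4 := hx i
  simp only [Set.mem_ofPred_eq] at hy
  linarith

lemma ball_form (n : ℕ) (x : Fin (n+1) → ℝ) (r a : ℝ) (hr : 1 ≤ r)
    (ha : a = 1 / √((n+1 : ℕ) : ℝ)) (hx : ∀ i, r ≤ x i) :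
    expMeasure (n+1) {y | √(∑ i, (x i - y i)^2) < r} =
      ∫⁻ w : Fin n → ℝ, ∫⁻ s : ℝ,
        Set.indicator {s : ℝ | (s - ∑ i, w i)^2 + ∑ i, (w i)^2 < 2 * r * a * s}
          (fun s => ENNReal.ofReal
            (Real.exp (-((∑ i, x i) - √((n+1 : ℕ) : ℝ) * r)) * Real.exp (-s))) s := by
  have hd0 : (0:ℝ) < ((n+1 : ℕ) : ℝ) := by positivity
  set q := √((n+1 : ℕ) : ℝ) with hq
  have hq0 : 0 < q := Real.sqrt_pos.2 hd0
  have hqq : q ^ 2 = ((n+1 : ℕ) : ℝ) := Real.sq_sqrt hd0.le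
  have hm : MeasurableSet {y : Fin (n+1) → ℝ | √(∑ i, (x i - y i)^2) < r} :=
    measurableSet_lt (by fun_prop) (by fun_prop)
  rw [expMeasure, withDensity_apply _ hm, ← lintegral_indicator hm,
    shear_lintegral n _ (Measurable.indicator (by fun_prop) hm) (fun i => x i - r * a)]
  refine lintegral_congr fun w => lintegral_congr fun s => ?_
  set y : Fin (n+1) → ℝ := Fin.cons (x 0 - r * a + (s - ∑ i, w i)) (fun i => x i.succ - r * a + w i)
    with hy
  have haq : a * q = 1 := by rw [ha]; field_simp
  have haaq : ((n:ℝ) + 1) * a = q := by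
    have : ((n:ℝ) + 1) = q ^ 2 := by rw [hqq]; push_cast; ring
    rw [this]; linear_combination q * haq
  have hsum : ∑ i, (x i - y i)^2 = r^2 - 2 * r * a * s + ((s - ∑ i, w i)^2 + ∑ i, (w i)^2) := by
    have e : ∀ i : Fin n, (x i.succ - (x i.succ - r * a + w i))^2
        = (r*a)^2 - 2 * (r * a) * w i + (w i)^2 := fun i => by ring
    rw [Fin.sum_univ_succ]
    simp only [hy, Fin.cons_zero, Fin.cons_succ]
    simp only [e, Finset.sum_add_distrib, Finset.sum_sub_distrib, ← Finset.mul_sum]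
    simp only [Finset.sum_const, Finset.card_univ, Fintype.card_fin, nsmul_eq_mul]
    linear_combination r^2 * a * haaq + r^2 * haq
  have hiff : √(∑ i, (x i - y i)^2) < r ↔
      (s - ∑ i, w i)^2 + ∑ i, (w i)^2 < 2 * r * a * s := by
    rw [Real.sqrt_lt' (by linarith), hsum]
    constructor <;> intro h <;> linarith
  by_cases h : √(∑ i, (x i - y i)^2) < r
  · rw [Set.indicator_of_mem (show y ∈ {y : Fin (n+1) → ℝ | √(∑ i, (x i - y i)^2) < r} from h),
      Set.indicator_of_mem (by exact hiff.1 h)]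
    have hpos := euc_ball_subset _ x r hx h
    have : ∑ i, |y i| = ∑ i, x i - q * r + s := by
      rw [Finset.sum_congr rfl fun i _ => abs_of_pos (hpos i)]
      rw [Fin.sum_univ_succ, Fin.sum_univ_succ]
      simp only [hy, Fin.cons_zero, Fin.cons_succ]
      simp only [Finset.sum_add_distrib, Finset.sum_sub_distrib]
      simp only [Finset.sum_const, Finset.card_univ, Fintype.card_fin, nsmul_eq_mul]
      linear_combination -r * haaq
    rw [this, ← Real.exp_add]
    congr 2
    ring
  · rw [Set.indicator_of_notMem (show y ∉ {y : Fin (n+1) → ℝ | √(∑ i, (x i - y i)^2) < r} from h),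
      Set.indicator_of_notMem (by exact fun h' => h (hiff.2 h'))]

lemma upper (n : ℕ) (E r a : ℝ) (hE : 0 ≤ E) (hr : 1 ≤ r) (ha : 0 < a) :
    (∫⁻ w : Fin n → ℝ, ∫⁻ s : ℝ,
        Set.indicator {s : ℝ | (s - ∑ i, w i)^2 + ∑ i, (w i)^2 < 2 * r * a * s}
          (fun s => ENNReal.ofReal (E * Real.exp (-s))) s) ≤
      ENNReal.ofReal ((2 * √(4 * Real.pi * a) ^ n) * E * √r ^ n) := by
  have hra : 0 < 4 * r * a := by positivity
  set b : ℝ := 1 / (4 * r * a) with hb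
  have hb0 : 0 < b := by positivity
  calc _ ≤ ∫⁻ w : Fin n → ℝ, ∫⁻ s : ℝ, ENNReal.ofReal (E * ∏ i, Real.exp (-b * (w i)^2)) *
        (Set.Ioi (0:ℝ)).indicator (fun s => ENNReal.ofReal (Real.exp ((-1/2) * s))) s := by
        refine lintegral_mono fun w => lintegral_mono fun s => ?_
        refine Set.indicator_apply_le' (fun hs => ?_) (fun _ => bot_le)
        simp only [Set.mem_ofPred_eq] at hs
        have h1 : 0 ≤ ∑ i, (w i)^2 := Finset.sum_nonneg fun i _ => sq_nonneg _
        have h2 : ∑ i, (w i)^2 < 2 * r * a * s := by nlinarith [sq_nonneg (s - ∑ i, w i)]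
        have hs0 : 0 < s := by
          by_contra hc
          have : 2 * r * a * s ≤ 0 := mul_nonpos_of_nonneg_of_nonpos (by positivity) (not_lt.1 hc)
          linarith
        rw [Set.indicator_of_mem (show s ∈ Set.Ioi (0:ℝ) from hs0),
          ← ENNReal.ofReal_mul (by positivity)]
        apply ENNReal.ofReal_le_ofReal
        rw [mul_assoc, ← Real.exp_sum, ← Real.exp_add]
        gcongr
        rw [← Finset.mul_sum]
        have : b * ∑ i, (w i)^2 ≤ s / 2 := by
          rw [hb, div_mul_eq_mul_div, div_le_iff₀ hra]
          linarith
        linarith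
    _ = (∫⁻ w : Fin n → ℝ, ENNReal.ofReal (E * ∏ i, Real.exp (-b * (w i)^2))) *
        ∫⁻ s in Set.Ioi (0:ℝ), ENNReal.ofReal (Real.exp ((-1/2) * s)) := by
        rw [lintegral_lintegral_mul (Measurable.aemeasurable (by fun_prop))
          (Measurable.indicator (by fun_prop) measurableSet_Ioi).aemeasurable,
          lintegral_indicator measurableSet_Ioi]
    _ = ENNReal.ofReal (E * √(Real.pi / b) ^ n) * ENNReal.ofReal 2 := by
        congr 1
        · rw [← ofReal_integral_eq_lintegral_ofReal]
          · rw [integral_const_mul,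
              integral_fintype_prod_volume_eq_pow (fun t : ℝ => Real.exp (-b * t^2)),
              integral_gaussian, Fintype.card_fin]
          · exact (Integrable.fintype_prod (f := fun _ t => Real.exp (-b * t^2))
              (fun i => integrable_exp_neg_mul_sq hb0)).const_mul E
          · exact Filter.Eventually.of_forall fun w => by positivity
        · rw [← ofReal_integral_eq_lintegral_ofReal]
          · rw [integral_exp_mul_Ioi (by norm_num)]
            norm_num
          · exact integrableOn_exp_mul_Ioi (by norm_num) 0
          · exact Filter.Eventually.of_forall fun w => by positivity
    _ ≤ _ := by
        rw [← ENNReal.ofReal_mul (by positivity)]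
        apply le_of_eq
        congr 1
        have : Real.pi / b = (4 * Real.pi * a) * r := by
          rw [hb]; field_simp
        rw [this, Real.sqrt_mul (by positivity), mul_pow]
        ring

lemma lower (n : ℕ) (E r a : ℝ) (hE : 0 ≤ E) (hr : 1 ≤ r)
    (ha : a = 1 / √((n+1 : ℕ) : ℝ)) :
    ENNReal.ofReal ((Real.exp (-(a/4)) * (a / 8) * (2 / (5 * ((n:ℝ)+1)^2)) ^ n) * E * √r ^ n) ≤
    (∫⁻ w : Fin n → ℝ, ∫⁻ s : ℝ,
        Set.indicator {s : ℝ | (s - ∑ i, w i)^2 + ∑ i, (w i)^2 < 2 * r * a * s}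
          (fun s => ENNReal.ofReal (E * Real.exp (-s))) s) := by
  have hd0 : (0:ℝ) < ((n+1 : ℕ) : ℝ) := by positivity
  have ha0 : 0 < a := by rw [ha]; positivity
  have ha2 : a^2 * ((n:ℝ)+1) = 1 := by
    rw [ha, div_pow, Real.sq_sqrt hd0.le]
    push_cast
    field_simp
  set ε : ℝ := 1 / (5 * ((n:ℝ)+1)^2) with hε
  have hε0 : 0 < ε := by positivity
  have hεn : ε * (5 * ((n:ℝ)+1)^2) = 1 := by rw [hε]; field_simp
  set R := √r with hR
  have hR2 : R^2 = r := Real.sq_sqrt (by linarith)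
  have hR0 : 0 ≤ R := Real.sqrt_nonneg _
  calc _ = (∫⁻ w : Fin n → ℝ, (Set.univ.pi fun _ => Set.Icc (-(ε * R)) (ε * R)).indicator 1 w) *
        ∫⁻ s : ℝ, (Set.Icc (a/8) (a/4)).indicator
          (fun _ => ENNReal.ofReal (E * Real.exp (-(a/4)))) s := by
        rw [lintegral_indicator_one (MeasurableSet.univ_pi fun _ => measurableSet_Icc),
          lintegral_indicator_const measurableSet_Icc, volume_pi_pi]
        simp only [Real.volume_Icc, Finset.prod_const, Finset.card_univ, Fintype.card_fin]
        rw [← ENNReal.ofReal_pow (by nlinarith [mul_nonneg hε0.le hR0]),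
          ← ENNReal.ofReal_mul (by positivity), ← ENNReal.ofReal_mul (pow_nonneg (by nlinarith [mul_nonneg hε0.le hR0]) _)]
        congr 1
        have e1 : ε * R - -(ε * R) = (2 / (5 * ((n:ℝ)+1)^2)) * R := by rw [hε]; ring
        rw [e1, mul_pow]
        ring
    _ = ∫⁻ w : Fin n → ℝ, ∫⁻ s : ℝ,
        (Set.univ.pi fun _ => Set.Icc (-(ε * R)) (ε * R)).indicator 1 w *
        (Set.Icc (a/8) (a/4)).indicator
          (fun _ => ENNReal.ofReal (E * Real.exp (-(a/4)))) s := by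
        rw [lintegral_lintegral_mul
          (Measurable.indicator measurable_one
            (MeasurableSet.univ_pi fun _ => measurableSet_Icc)).aemeasurable
          (Measurable.indicator measurable_const measurableSet_Icc).aemeasurable]
    _ ≤ _ := by
        refine lintegral_mono fun w => lintegral_mono fun s => ?_
        by_cases hw : w ∈ (Set.univ.pi fun _ : Fin n => Set.Icc (-(ε * R)) (ε * R))
        swap
        · simp only [Set.indicator_of_notMem hw, zero_mul]; exact zero_le
        by_cases hs : s ∈ Set.Icc (a/8) (a/4)
        swap
        · simp only [Set.indicator_of_notMem hs, mul_zero]; exact zero_le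
        have hwi : ∀ i, |w i| ≤ ε * R := fun i => abs_le.2 (hw i (Set.mem_univ i))
        have h1 : ∑ i, (w i)^2 ≤ n * (ε * R)^2 := by
          calc _ ≤ ∑ i : Fin n, (ε * R)^2 := Finset.sum_le_sum fun i _ => by
                rw [← sq_abs]; exact pow_le_pow_left₀ (abs_nonneg _) (hwi i) 2
            _ = _ := by simp
        have h2 : |∑ i, w i| ≤ n * (ε * R) := by
          calc _ ≤ ∑ i, |w i| := Finset.abs_sum_le_sum_abs _ _
            _ ≤ ∑ i : Fin n, (ε * R) := Finset.sum_le_sum fun i _ => hwi i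
            _ = _ := by simp
        have h3 : (∑ i, w i)^2 ≤ (n * (ε * R))^2 := by
          rw [← sq_abs]; exact pow_le_pow_left₀ (abs_nonneg _) h2 2
        have hmem : s ∈ {s : ℝ | (s - ∑ i, w i)^2 + ∑ i, (w i)^2 < 2 * r * a * s} := by
          simp only [Set.mem_ofPred_eq]
          have h4 : (s - ∑ i, w i)^2 ≤ 2 * s^2 + 2 * (∑ i, w i)^2 := by
            nlinarith [sq_nonneg (s + ∑ i, w i)]
          have h5 : s^2 ≤ (a/4)^2 := pow_le_pow_left₀ (by linarith [hs.1]) hs.2 2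
          have h6 : 2 * r * a * (a/8) ≤ 2 * r * a * s :=
            mul_le_mul_of_nonneg_left hs.1 (by positivity)
          have h7 : (n * (ε * R))^2 = n^2 * ε^2 * r := by rw [← hR2]; ring
          have h8 : n * (ε * R)^2 = n * ε^2 * r := by rw [← hR2]; ring
          rw [h7] at h3
          rw [h8] at h1
          have h9 : (2 * (n:ℝ)^2 + n) * ε^2 < a^2 / 8 := by
            have hn : (0:ℝ) ≤ n := Nat.cast_nonneg n
            set N : ℝ := (n:ℝ) + 1 with hN
            have hN1 : 1 ≤ N := by linarith
            have e1 : a^2 = 1 / N := by field_simp; linarith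
            have e2 : 2 * (n:ℝ)^2 + n ≤ 3 * N^2 := by
              rw [hN]; nlinarith
            calc _ ≤ 3 * N^2 * ε^2 := by gcongr
              _ = 3 / (25 * N^2) := by rw [hε]; field_simp; norm_num
              _ < _ := by
                rw [e1, div_div, div_lt_div_iff₀ (by positivity) (by positivity)]
                nlinarith
          have h10 : (2 * (n:ℝ)^2 + n) * ε^2 * r < a^2 / 8 * r :=
            mul_lt_mul_of_pos_right h9 (by linarith)
          have h11 : a^2 ≤ a^2 * r := le_mul_of_one_le_right (sq_nonneg a) hr
          nlinarith
        rw [Set.indicator_of_mem hw, Set.indicator_of_mem hs, Set.indicator_of_mem hmem,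
          Pi.one_apply, one_mul]
        apply ENNReal.ofReal_le_ofReal
        gcongr
        exact hs.2

theorem expMeasure_euclidean_ball_estimate (d : ℕ) (hd : 1 ≤ d) :
    ∃ c C : ℝ, 0 < c ∧ 0 < C ∧
      ∀ x : Fin d → ℝ, (∀ i, 0 < x i) → ∀ r : ℝ, 1 ≤ r → (∀ i, r ≤ x i) →
        {y : Fin d → ℝ | Real.sqrt (∑ i, (x i - y i) ^ 2) < r} ⊆ {y | ∀ i, 0 < y i} ∧
        ENNReal.ofReal
            (c * Real.exp (-((∑ i, x i) - Real.sqrt d * r)) * r ^ (((d : ℝ) - 1) / 2))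
          ≤ expMeasure d {y : Fin d → ℝ | Real.sqrt (∑ i, (x i - y i) ^ 2) < r} ∧
        expMeasure d {y : Fin d → ℝ | Real.sqrt (∑ i, (x i - y i) ^ 2) < r}
          ≤ ENNReal.ofReal
              (C * Real.exp (-((∑ i, x i) - Real.sqrt d * r)) * r ^ (((d : ℝ) - 1) / 2)) := by
  obtain ⟨n, rfl⟩ : ∃ n, d = n + 1 := ⟨d - 1, by omega⟩
  set a : ℝ := 1 / √((n+1 : ℕ) : ℝ) with ha
  have ha0 : 0 < a := by positivity
  refine ⟨Real.exp (-(a/4)) * (a / 8) * (2 / (5 * ((n:ℝ)+1)^2)) ^ n,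
    2 * √(4 * Real.pi * a) ^ n, by positivity, by positivity, ?_⟩
  intro x _ r hr hx
  have hp : r ^ ((((n + 1 : ℕ) : ℝ) - 1) / 2) = √r ^ n := by
    rw [Real.sqrt_eq_rpow, ← Real.rpow_natCast, ← Real.rpow_mul (by linarith)]
    congr 1
    push_cast
    ring
  refine ⟨?_, ?_, ?_⟩
  · exact euc_ball_subset _ x r hx
  · rw [hp, ball_form n x r a hr ha hx]
    exact lower n _ r a (Real.exp_pos _).le hr ha
  · rw [hp, ball_form n x r a hr ha hx]
    exact upper n _ r a (Real.exp_pos _).le hr ha0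
end

section
/- Let d ≥ 2 and α = (α₁,…,α_d) ∈ (−1,∞)^d. Neither the non-centered maximal operator M_{μ_α}^{Q+} on ℝ^d_+ (supremum over the truncated cubes Q(z,r) = {y ∈ ℝ^d_+ : |z − y|_∞ < r} with z ∈ ℝ^d_+) nor the non-centered maximal operator M_{μ_α}^{B+} on ℝ^d_+ (supremum over the truncated Euclidean balls B(z,r) = {y ∈ ℝ^d_+ : |z − y|₂ < r} with z ∈ ℝ^d_+) is of weak type (1,1) with respect to (ℝ^d_+, dμ_α). -/
open MeasureTheory ENNReal

/-- The Laguerre-type measure `dμ_α(x) = ∏ |x_i|^{α_i} exp(-|x_i|) dx` on `ℝ^d`. -/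
noncomputable def laguerreMeasure (d : ℕ) (α : Fin d → ℝ) : Measure (Fin d → ℝ) :=
  volume.withDensity
    (fun x => ENNReal.ofReal (∏ i, |x i| ^ (α i) * Real.exp (-|x i|)))

/-- The family of truncated cubes `Q(z,r) = {y ∈ ℝ^d_+ : |z - y|_∞ < r}`, `z ∈ ℝ^d_+`. -/
def cubesPlus (d : ℕ) : Set (Set (Fin d → ℝ)) :=
  {B | ∃ (z : Fin d → ℝ) (r : ℝ), z ∈ posOrthant d ∧ 0 < r ∧
    B = {y | y ∈ posOrthant d ∧ ∀ i, |z i - y i| < r}}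

/-- The family of truncated Euclidean balls `B(z,r) = {y ∈ ℝ^d_+ : |z - y|₂ < r}`,
`z ∈ ℝ^d_+`. -/
def euclideanBallsPlus (d : ℕ) : Set (Set (Fin d → ℝ)) :=
  {B | ∃ (z : Fin d → ℝ) (r : ℝ), z ∈ posOrthant d ∧ 0 < r ∧
    B = {y | y ∈ posOrthant d ∧ Real.sqrt (∑ i, (z i - y i) ^ 2) < r}}

lemma rpow_cmp (x y a : ℝ) (hx : 0 < x) (hy : 0 < y) (h1 : x ≤ 2 * y) (h2 : y ≤ 2 * x) :
    x ^ a ≤ 2 ^ |a| * y ^ a := by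
  rcases le_total 0 a with ha | ha
  · rw [abs_of_nonneg ha, ← Real.mul_rpow (by norm_num) hy.le]
    exact Real.rpow_le_rpow hx.le h1 ha
  · rw [abs_of_nonpos ha]
    have h3 : y / 2 ≤ x := by linarith
    have := Real.rpow_le_rpow_of_nonpos (by positivity) h3 ha
    rw [Real.div_rpow hy.le (by norm_num)] at this
    rw [Real.rpow_neg (by norm_num)]
    calc _ ≤ _ := this
      _ = _ := by ring

/-- The translation covariant exponential measure. -/
noncomputable def nuM (d : ℕ) : Measure (Fin d → ℝ) :=
  volume.withDensity (fun x => ENNReal.ofReal (Real.exp (-∑ i, x i)))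

lemma nuM_sub (d : ℕ) (w : Fin d → ℝ) (E : Set (Fin d → ℝ)) (hE : MeasurableSet E) :
    nuM d {x | x - w ∈ E} = ENNReal.ofReal (Real.exp (-∑ i, w i)) * nuM d E := by
  have hE' : MeasurableSet {x | x - w ∈ E} := (measurable_id.sub_const w) hE
  unfold nuM
  rw [withDensity_apply _ hE', withDensity_apply _ hE, ← lintegral_indicator hE',
    ← lintegral_indicator hE, ← lintegral_const_mul' _ _ ENNReal.ofReal_ne_top]
  rw [← lintegral_sub_right_eq_self (fun x => ENNReal.ofReal (Real.exp (-∑ i, w i)) *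
    E.indicator (fun x => ENNReal.ofReal (Real.exp (-∑ i, x i))) x) w]
  congr 1
  ext x
  by_cases hx : x - w ∈ E
  · rw [Set.indicator_of_mem (by exact hx), Set.indicator_of_mem hx,
      ← ENNReal.ofReal_mul (Real.exp_pos _).le, ← Real.exp_add]
    congr 2
    simp [Finset.sum_sub_distrib]
    ring
  · rw [Set.indicator_of_notMem (by exact hx), Set.indicator_of_notMem hx, mul_zero]

lemma nuM_lt_top (d : ℕ) (E : Set (Fin d → ℝ)) (R : ℝ)
    (h : ∀ x ∈ E, ∀ i, |x i| ≤ R) : nuM d E < ⊤ := by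
  have hsub : E ⊆ Set.Icc (fun _ => -R) (fun _ => R) := by
    intro x hx
    exact ⟨fun i => (abs_le.1 (h x hx i)).1, fun i => (abs_le.1 (h x hx i)).2⟩
  refine (measure_mono hsub).trans_lt ?_
  unfold nuM
  rw [withDensity_apply _ measurableSet_Icc]
  have hc : Continuous (fun x : Fin d → ℝ => Real.exp (-∑ i, x i)) := by fun_prop
  have hi := hc.continuousOn.integrableOn_compact (μ := volume)
    (isCompact_Icc (a := fun _ : Fin d => -R) (b := fun _ => R))
  have := hi.lintegral_lt_top
  exact this

lemma nuM_pos (d : ℕ) (E : Set (Fin d → ℝ)) (hE : IsOpen E) (hn : E.Nonempty) :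
    0 < nuM d E := by
  unfold nuM
  rw [pos_iff_ne_zero]
  intro h0
  rw [withDensity_apply_eq_zero (by fun_prop)] at h0
  have : {x : Fin d → ℝ | ENNReal.ofReal (Real.exp (-∑ i, x i)) ≠ 0} = Set.univ := by
    ext x; simp [Real.exp_pos]
  rw [this, Set.univ_inter] at h0
  exact (hE.measure_pos volume hn).ne' h0

lemma meas_cmp (d : ℕ) (α : Fin d → ℝ) (A R : ℝ) (hR : 0 < R) (hA : A = 2 * R)
    (E : Set (Fin d → ℝ)) (hE : MeasurableSet E)
    (h : ∀ x ∈ E, ∀ i, |x i - A| ≤ R) :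
    (laguerreMeasure d α).restrict (posOrthant d) E ≤
      ENNReal.ofReal ((∏ i, (2:ℝ) ^ |α i|) * ∏ i, A ^ α i) * nuM d E ∧
    ENNReal.ofReal (∏ i, A ^ α i) * nuM d E ≤ ENNReal.ofReal (∏ i, (2:ℝ) ^ |α i|) *
      (laguerreMeasure d α).restrict (posOrthant d) E := by
  have hb : ∀ x ∈ E, ∀ i, 0 < x i ∧ x i ≤ 2 * A ∧ A ≤ 2 * x i := by
    intro x hx i
    have := abs_le.1 (h x hx i)
    refine ⟨?_, ?_, ?_⟩ <;> linarith
  have hA0 : 0 < A := by linarith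
  have hpos : E ⊆ posOrthant d := fun x hx i => (hb x hx i).1
  rw [Measure.restrict_apply hE, Set.inter_eq_left.2 hpos]
  unfold laguerreMeasure nuM
  rw [withDensity_apply _ hE, withDensity_apply _ hE,
    ← lintegral_const_mul' _ _ ENNReal.ofReal_ne_top,
    ← lintegral_const_mul' _ _ ENNReal.ofReal_ne_top,
    ← lintegral_const_mul' _ _ ENNReal.ofReal_ne_top]
  have hP : 0 ≤ ∏ i, (2:ℝ) ^ |α i| := Finset.prod_nonneg fun i _ => by positivity
  have hK : 0 ≤ ∏ i, A ^ α i := Finset.prod_nonneg fun i _ => by positivity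
  constructor
  · refine setLIntegral_mono' hE fun x hx => ?_
    rw [← ENNReal.ofReal_mul (by positivity)]
    apply ENNReal.ofReal_le_ofReal
    rw [← Finset.sum_neg_distrib, Real.exp_sum, ← Finset.prod_mul_distrib,
      ← Finset.prod_mul_distrib]
    refine Finset.prod_le_prod (fun i _ => by positivity) fun i _ => ?_
    obtain ⟨h1, h2, h3⟩ := hb x hx i
    rw [abs_of_pos h1]
    gcongr
    exact rpow_cmp _ _ _ h1 hA0 h2 h3
  · refine setLIntegral_mono' hE fun x hx => ?_
    rw [← ENNReal.ofReal_mul (by positivity), ← ENNReal.ofReal_mul (by positivity)]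
    apply ENNReal.ofReal_le_ofReal
    rw [← Finset.sum_neg_distrib, Real.exp_sum, ← Finset.prod_mul_distrib,
      ← Finset.prod_mul_distrib]
    refine Finset.prod_le_prod (fun i _ => by positivity) fun i _ => ?_
    obtain ⟨h1, h2, h3⟩ := hb x hx i
    rw [abs_of_pos h1, ← mul_assoc]
    gcongr
    exact rpow_cmp _ _ _ hA0 h1 h3 h2

/-- The constant of the slab lemma. -/
noncomputable def slabC : ℝ≥0∞ := ∑' k : ℕ, 2 * ENNReal.ofReal (Real.exp (-(k:ℝ)))

lemma slabC_ne_top : slabC ≠ ⊤ := by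
  unfold slabC
  rw [ENNReal.tsum_mul_left]
  refine ENNReal.mul_ne_top (by norm_num) ?_
  exact Real.summable_exp_neg_nat.tsum_ofReal_ne_top

lemma slab (d : ℕ) (i₀ i₁ : Fin d) (D : Set (Fin d → ℝ)) (hD : MeasurableSet D) (T : ℝ)
    (hT : 0 < T)
    (h1 : ∀ k : ℕ, ∃ w : Fin d → ℝ, ∑ i, w i = k ∧ w i₀ - w i₁ = k * T ∧
      ∀ x ∈ D, k * T ≤ x i₀ - x i₁ → x - w ∈ D)
    (h2 : ∀ k : ℕ, ∃ w : Fin d → ℝ, ∑ i, w i = k ∧ w i₁ - w i₀ = k * T ∧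
      ∀ x ∈ D, k * T ≤ x i₁ - x i₀ → x - w ∈ D) :
    nuM d D ≤ slabC * nuM d {x | x ∈ D ∧ |x i₀ - x i₁| < T} := by
  set G := {x | x ∈ D ∧ |x i₀ - x i₁| < T} with hG
  have hGm : MeasurableSet G := by
    refine hD.inter (measurableSet_lt (f := fun x : Fin d → ℝ => |x i₀ - x i₁|) ?_ measurable_const)
    fun_prop
  choose w hw1 hw2 hw3 using h1
  choose v hv1 hv2 hv3 using h2
  have hsub : D ⊆ ⋃ k : ℕ, ({x | x - w k ∈ G} ∪ {x | x - v k ∈ G}) := by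
    intro x hx
    rw [Set.mem_iUnion]
    refine ⟨⌊|x i₀ - x i₁| / T⌋₊, ?_⟩
    set k := ⌊|x i₀ - x i₁| / T⌋₊ with hk
    have hk1 : k * T ≤ |x i₀ - x i₁| := by
      rw [← le_div_iff₀ hT]; exact Nat.floor_le (by positivity)
    have hk2 : |x i₀ - x i₁| < k * T + T := by
      have := Nat.lt_floor_add_one (|x i₀ - x i₁| / T)
      rw [div_lt_iff₀ hT] at this
      rw [← hk] at this
      linarith
    rcases le_total 0 (x i₀ - x i₁) with h | h
    · left
      rw [abs_of_nonneg h] at hk1 hk2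
      refine ⟨hw3 k x hx hk1, ?_⟩
      have := hw2 k
      simp only [Pi.sub_apply]
      rw [abs_lt]; constructor <;> linarith
    · right
      rw [abs_of_nonpos h] at hk1 hk2
      refine ⟨hv3 k x hx (by linarith), ?_⟩
      have := hv2 k
      simp only [Pi.sub_apply]
      rw [abs_lt]; constructor <;> linarith
  calc nuM d D ≤ _ := measure_mono hsub
    _ ≤ ∑' k : ℕ, nuM d ({x | x - w k ∈ G} ∪ {x | x - v k ∈ G}) := measure_iUnion_le _
    _ ≤ ∑' k : ℕ, 2 * ENNReal.ofReal (Real.exp (-(k:ℝ))) * nuM d G := by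
      refine ENNReal.tsum_le_tsum fun k => (measure_union_le _ _).trans ?_
      rw [nuM_sub _ _ _ hGm, nuM_sub _ _ _ hGm, hw1, hv1, mul_assoc, two_mul]
    _ = _ := by rw [ENNReal.tsum_mul_right]; rfl

lemma key (d : ℕ) (α : Fin d → ℝ) (i₀ i₁ : Fin d) (F : Set (Set (Fin d → ℝ)))
    (hF : ∀ n : ℕ, ∃ (D : Set (Fin d → ℝ)) (T R : ℝ) (z : ℕ → Fin d → ℝ),
      0 < T ∧ 0 < R ∧ IsOpen D ∧ 0 ∈ D ∧
      nuM d D ≤ slabC * nuM d {x | x ∈ D ∧ |x i₀ - x i₁| < T} ∧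
      (∀ k, ∑ i, z k i = 0) ∧ (∀ k, z k i₀ - z k i₁ = 2 * k * T) ∧
      (∀ k < n, ∀ x : Fin d → ℝ, x - z k ∈ D → ∀ i, |x i| ≤ R) ∧
      (∀ k < n, ∀ x : Fin d → ℝ, (∀ i, |x i| < 1) → x - z k ∈ D) ∧
      (∀ k < n, {x | x - (z k + fun _ => 2 * R) ∈ D} ∈ F)) :
    ¬ ∃ C : ℝ, 0 < C ∧
      ∀ f : (Fin d → ℝ) → ℝ,
        Integrable f ((laguerreMeasure d α).restrict (posOrthant d)) →
        ∀ lam : ℝ, 0 < lam →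
          (laguerreMeasure d α).restrict (posOrthant d) {x | ENNReal.ofReal lam
              < maximalOp d ((laguerreMeasure d α).restrict (posOrthant d)) F f x}
            ≤ ENNReal.ofReal (C / lam)
              * ∫⁻ x, ENNReal.ofReal |f x| ∂((laguerreMeasure d α).restrict (posOrthant d)) := by
  rintro ⟨C, hC, H⟩
  set P : ℝ := ∏ i, (2:ℝ) ^ |α i| with hP
  have hP0 : 0 < P := Finset.prod_pos fun i _ => by positivity
  obtain ⟨n, hn⟩ := exists_nat_gt (2 * C * P ^ 2 * slabC.toReal)
  have hn0 : 0 < n := by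
    have : (0:ℝ) < n := lt_of_le_of_lt (by positivity) hn
    exact_mod_cast this
  obtain ⟨D, T, R, z, hT, hR, hDo, hD0, hsl, hz0, hz1, hzR, hzN, hzF⟩ := hF n
  set G := {x | x ∈ D ∧ |x i₀ - x i₁| < T} with hG
  have hGo : IsOpen G := by
    refine hDo.inter (isOpen_lt (f := fun x : Fin d → ℝ => |x i₀ - x i₁|) ?_ continuous_const)
    fun_prop
  set A : ℝ := 2 * R with hA
  have hA0 : 0 < A := by positivity
  set κ : ℝ := ∏ i, A ^ α i with hκ
  have hκ0 : 0 < κ := Finset.prod_pos fun i _ => by positivity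
  set μ := (laguerreMeasure d α).restrict (posOrthant d) with hμ
  let a : Fin d → ℝ := fun _ => A
  let N : Set (Fin d → ℝ) := {x | ∀ i, |x i| < 1}
  have hNo : IsOpen N := by
    have : N = ⋂ i, {x : Fin d → ℝ | |x i| < 1} := by ext x; simp [N]
    rw [this]
    exact isOpen_iInter_of_finite fun i => isOpen_lt (by fun_prop) continuous_const
  let E : ℕ → Set (Fin d → ℝ) := fun k => {x | x - (z k + a) ∈ D}
  let G' : ℕ → Set (Fin d → ℝ) := fun k => {x | x - (z k + a) ∈ G}
  let N' : Set (Fin d → ℝ) := {x | x - a ∈ N}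
  have hEo : ∀ k, IsOpen (E k) := fun k => hDo.preimage (by fun_prop)
  have hGo' : ∀ k, IsOpen (G' k) := fun k => hGo.preimage (by fun_prop)
  have hNo' : IsOpen N' := hNo.preimage (by fun_prop)
  have hGE : ∀ k, G' k ⊆ E k := fun k x hx => hx.1
  have hER : ∀ k < n, ∀ x ∈ E k, ∀ i, |x i - A| ≤ R := by
    intro k hk x hx i
    refine hzR k hk (x - a) ?_ i
    have : x - a - z k = x - (z k + a) := by abel
    rw [this]; exact hx
  have hNE : ∀ k < n, N' ⊆ E k := by
    intro k hk x hx
    have h := hzN k hk (x - a) hx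
    have : x - a - z k = x - (z k + a) := by abel
    rw [this] at h; exact h
  have hs : ∀ k, ∑ i, (z k + a) i = d * A := by
    intro k
    simp [Finset.sum_add_distrib, hz0, a]
  set e : ℝ := Real.exp (-(d * A)) with he
  have he0 : 0 < e := Real.exp_pos _
  have hD_top : nuM d D ≠ ⊤ := by
    have h := nuM_lt_top d {x | x - z 0 ∈ D} R (fun x hx => hzR 0 hn0 x hx)
    rw [nuM_sub _ _ _ hDo.measurableSet, hz0] at h
    simpa using h.ne
  have hG_top : nuM d G ≠ ⊤ := ((measure_mono (fun x hx => hx.1)).trans_lt hD_top.lt_top).ne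
  have hG_pos : 0 < nuM d G := nuM_pos d G hGo ⟨0, hD0, by simpa using hT⟩
  have hD_pos : 0 < nuM d D := nuM_pos d D hDo ⟨0, hD0⟩
  set X := (nuM d D).toReal with hX
  set g := (nuM d G).toReal with hg
  have hXe : nuM d D = ENNReal.ofReal X := (ENNReal.ofReal_toReal hD_top).symm
  have hge : nuM d G = ENNReal.ofReal g := (ENNReal.ofReal_toReal hG_top).symm
  have hX0 : 0 < X := ENNReal.toReal_pos hD_pos.ne' hD_top
  have hg0 : 0 < g := ENNReal.toReal_pos hG_pos.ne' hG_top
  have hXg : X ≤ slabC.toReal * g := by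
    rw [hX, hg, ← ENNReal.toReal_mul]
    exact ENNReal.toReal_mono (ENNReal.mul_ne_top slabC_ne_top hG_top) hsl
  have hEμ : ∀ k < n, μ (E k) ≤ ENNReal.ofReal (P * κ * (e * X)) := by
    intro k hk
    have h := (meas_cmp d α A R hR hA (E k) (hEo k).measurableSet (hER k hk)).1
    rw [nuM_sub _ _ _ hDo.measurableSet, hs, hXe, ← ENNReal.ofReal_mul he0.le,
      ← ENNReal.ofReal_mul (by positivity)] at h
    exact h
  have hGμ : ∀ k < n, ENNReal.ofReal (κ * (e * g)) ≤ ENNReal.ofReal P * μ (G' k) := by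
    intro k hk
    have h := (meas_cmp d α A R hR hA (G' k) (hGo' k).measurableSet
      (fun x hx => hER k hk x (hGE k hx))).2
    rw [nuM_sub _ _ _ hGo.measurableSet, hs, hge, ← ENNReal.ofReal_mul he0.le,
      ← ENNReal.ofReal_mul (by positivity)] at h
    exact h
  set K : ℝ := P * κ * (e * X) with hK
  have hK0 : 0 < K := by positivity
  have hN_top : μ N' ≠ ⊤ :=
    (((measure_mono (hNE 0 hn0)).trans (hEμ 0 hn0)).trans_lt ENNReal.ofReal_lt_top).ne
  have hN_pos : 0 < μ N' := by
    have h := (meas_cmp d α A R hR hA N' hNo'.measurableSet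
      (fun x hx => hER 0 hn0 x (hNE 0 hn0 hx))).2
    rw [pos_iff_ne_zero]
    intro h0
    rw [← hμ, h0, mul_zero] at h
    have h1 : 0 < nuM d N' := nuM_pos d N' hNo' ⟨a, by simp [N', N]⟩
    have h2 : 0 < ENNReal.ofReal κ := by simpa using hκ0
    exact (ENNReal.mul_pos h2.ne' h1.ne').ne' (le_antisymm h zero_le)
  set m := (μ N').toReal with hm
  have hme : μ N' = ENNReal.ofReal m := (ENNReal.ofReal_toReal hN_top).symm
  have hm0 : 0 < m := ENNReal.toReal_pos hN_pos.ne' hN_top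
  let f : (Fin d → ℝ) → ℝ := N'.indicator (fun _ => 1)
  have hf : Integrable f μ := by
    refine (integrable_indicator_iff hNo'.measurableSet).2 ?_
    exact integrableOn_const hN_top
  have hfa : (fun x => ENNReal.ofReal |f x|) = N'.indicator 1 := by
    ext x
    by_cases hx : x ∈ N' <;> simp [f, hx]
  have hlam : 0 < m / (2 * K) := by positivity
  have H1 := H f hf _ hlam
  rw [hfa, lintegral_indicator_one hNo'.measurableSet, hme,
    ← ENNReal.ofReal_mul (by positivity)] at H1
  have hCK : C / (m / (2 * K)) * m = 2 * C * K := by field_simp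
  rw [hCK] at H1
  have hsubset : (⋃ k ∈ Finset.range n, G' k) ⊆
      {x | ENNReal.ofReal (m / (2 * K)) < maximalOp d μ F f x} := by
    intro x hx
    simp only [Set.mem_iUnion, Finset.mem_range] at hx
    obtain ⟨k, hk, hx⟩ := hx
    have hxE := hGE k hx
    have hEpos : 0 < μ (E k) := hN_pos.trans_le (measure_mono (hNE k hk))
    have h1 : (∫⁻ y in E k, ENNReal.ofReal |f y| ∂μ) / μ (E k) ≤ maximalOp d μ F f x := by
      unfold maximalOp
      exact le_iSup₂_of_le (E k) (hzF k hk) (le_iSup₂_of_le hxE hEpos le_rfl)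
    refine lt_of_lt_of_le ?_ h1
    rw [hfa, lintegral_indicator_one hNo'.measurableSet,
      Measure.restrict_apply hNo'.measurableSet, Set.inter_eq_left.2 (hNE k hk), hme]
    calc ENNReal.ofReal (m / (2 * K)) < ENNReal.ofReal (m / K) := by
          rw [ENNReal.ofReal_lt_ofReal_iff (by positivity)]
          apply div_lt_div_of_pos_left hm0 hK0; linarith
      _ = ENNReal.ofReal m / ENNReal.ofReal K := ENNReal.ofReal_div_of_pos hK0
      _ ≤ _ := ENNReal.div_le_div_left (hEμ k hk) _
  have hdisj : Set.PairwiseDisjoint (↑(Finset.range n)) G' := by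
    intro j _ k _ hjk
    rw [Function.onFun, Set.disjoint_left]
    intro x hxj hxk
    have h1 := abs_lt.1 hxj.2
    have h2 := abs_lt.1 hxk.2
    simp only [Pi.sub_apply, Pi.add_apply, a] at h1 h2
    have e1 := hz1 j
    have e2 := hz1 k
    rcases lt_or_gt_of_ne hjk with h | h
    · have : (j:ℝ) + 1 ≤ k := by exact_mod_cast h
      nlinarith
    · have : (k:ℝ) + 1 ≤ j := by exact_mod_cast h
      nlinarith
  have hfin : ENNReal.ofReal (n * (κ * (e * g))) ≤ ENNReal.ofReal (P * (2 * C * K)) := by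
    calc ENNReal.ofReal (n * (κ * (e * g)))
        = ∑ k ∈ Finset.range n, ENNReal.ofReal (κ * (e * g)) := by
          rw [Finset.sum_const, Finset.card_range, nsmul_eq_mul,
            ENNReal.ofReal_mul (by positivity), ENNReal.ofReal_natCast]
      _ ≤ ∑ k ∈ Finset.range n, ENNReal.ofReal P * μ (G' k) :=
          Finset.sum_le_sum fun k hk => hGμ k (Finset.mem_range.1 hk)
      _ = ENNReal.ofReal P * μ (⋃ k ∈ Finset.range n, G' k) := by
          rw [← Finset.mul_sum, measure_biUnion_finset hdisj
            (fun k _ => (hGo' k).measurableSet)]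
      _ ≤ ENNReal.ofReal P * ENNReal.ofReal (2 * C * K) := by
          gcongr
          exact (measure_mono hsubset).trans H1
      _ = _ := by rw [← ENNReal.ofReal_mul hP0.le]
  rw [ENNReal.ofReal_le_ofReal_iff (by positivity)] at hfin
  have h1 : n * (κ * e * g) ≤ (2 * C * P ^ 2 * slabC.toReal) * (κ * e * g) := by
    calc n * (κ * e * g) = n * (κ * (e * g)) := by ring
      _ ≤ _ := hfin
      _ = (2 * C * P ^ 2 * κ * e) * X := by rw [hK]; ring
      _ ≤ (2 * C * P ^ 2 * κ * e) * (slabC.toReal * g) := by gcongr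
      _ = _ := by ring
  have h2 := le_of_mul_le_mul_right h1 (by positivity)
  linarith

lemma sum_two (d : ℕ) (i₀ i₁ : Fin d) (h : i₀ ≠ i₁) (s t : ℝ) :
    ∑ i, (if i = i₀ then s else if i = i₁ then t else 0) = s + t := by
  have : ∀ i : Fin d, (if i = i₀ then s else if i = i₁ then t else 0) =
      (if i = i₀ then s else 0) + (if i = i₁ then t else 0) := by
    intro i
    by_cases h0 : i = i₀
    · subst h0; simp [h]
    · simp [h0]
  simp [this, Finset.sum_add_distrib]

lemma cubes_case (d : ℕ) (i₀ i₁ : Fin d) (hi : i₀ ≠ i₁) (n : ℕ) :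
    ∃ (D : Set (Fin d → ℝ)) (T R : ℝ) (z : ℕ → Fin d → ℝ),
      0 < T ∧ 0 < R ∧ IsOpen D ∧ 0 ∈ D ∧
      nuM d D ≤ slabC * nuM d {x | x ∈ D ∧ |x i₀ - x i₁| < T} ∧
      (∀ k, ∑ i, z k i = 0) ∧ (∀ k, z k i₀ - z k i₁ = 2 * k * T) ∧
      (∀ k < n, ∀ x : Fin d → ℝ, x - z k ∈ D → ∀ i, |x i| ≤ R) ∧
      (∀ k < n, ∀ x : Fin d → ℝ, (∀ i, |x i| < 1) → x - z k ∈ D) ∧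
      (∀ k < n, {x | x - (z k + fun _ => 2 * R) ∈ D} ∈ cubesPlus d) := by
  have hzb : ∀ k < n, ∀ i, |(if i = i₀ then (k:ℝ) else if i = i₁ then -(k:ℝ) else 0)| ≤ n := by
    intro k hk i
    have : (k:ℝ) ≤ n := by exact_mod_cast hk.le
    have h0 : (0:ℝ) ≤ k := by positivity
    split_ifs <;> simp <;> linarith
  have hO : IsOpen {x : Fin d → ℝ | ∀ i, |x i| < (n:ℝ) + 1} := by
    have : {x : Fin d → ℝ | ∀ i, |x i| < (n:ℝ) + 1} =
        ⋂ i, {x : Fin d → ℝ | |x i| < (n:ℝ) + 1} := by ext x; simp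
    rw [this]
    exact isOpen_iInter_of_finite fun i => isOpen_lt (by fun_prop) continuous_const
  have hRb : ∀ k < n, ∀ x : Fin d → ℝ,
      (∀ i, |x i - (if i = i₀ then (k:ℝ) else if i = i₁ then -(k:ℝ) else 0)| < (n:ℝ) + 1) →
      ∀ i, |x i| ≤ 2 * n + 1 := by
    intro k hk x hx i
    have h1 := abs_lt.1 (hx i)
    have h2 := abs_le.1 (hzb k hk i)
    rw [abs_le]; constructor <;> linarith
  refine ⟨{x | ∀ i, |x i| < (n:ℝ) + 1}, 1, 2 * n + 1,
    fun k i => if i = i₀ then (k:ℝ) else if i = i₁ then -(k:ℝ) else 0,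
    one_pos, by positivity, hO, ?_, ?_, ?_, ?_, ?_, ?_, ?_⟩
  · intro i; simp; positivity
  · refine slab d i₀ i₁ _ hO.measurableSet 1 one_pos ?_ ?_
    · intro k
      refine ⟨fun i => if i = i₀ then (k:ℝ) else if i = i₁ then 0 else 0, ?_, ?_, ?_⟩
      · rw [sum_two d i₀ i₁ hi]; simp
      · simp [hi.symm]
      · intro x hx hk i
        have h0 : (0:ℝ) ≤ k := by positivity
        have h1 := abs_lt.1 (hx i₁)
        have h2 := abs_lt.1 (hx i)
        simp only [Pi.sub_apply]
        by_cases h : i = i₀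
        · subst h; rw [if_pos rfl, abs_lt]; constructor <;> linarith
        · simpa [h] using hx i
    · intro k
      refine ⟨fun i => if i = i₀ then 0 else if i = i₁ then (k:ℝ) else 0, ?_, ?_, ?_⟩
      · rw [sum_two d i₀ i₁ hi]; simp
      · simp [hi.symm]
      · intro x hx hk i
        have h0 : (0:ℝ) ≤ k := by positivity
        have h1 := abs_lt.1 (hx i₀)
        have h2 := abs_lt.1 (hx i)
        simp only [Pi.sub_apply]
        by_cases h : i = i₁
        · subst h; rw [if_neg hi.symm, if_pos rfl, abs_lt]; constructor <;> linarith
        · simpa [h] using hx i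
  · intro k; rw [sum_two d i₀ i₁ hi]; ring
  · intro k; simp [hi.symm]; ring
  · intro k hk x hx i
    exact hRb k hk x hx i
  · intro k hk x hx i
    have h1 := abs_lt.1 (hx i)
    have h2 := abs_le.1 (hzb k hk i)
    simp only [Pi.sub_apply]
    rw [abs_lt]; constructor <;> linarith
  · intro k hk
    refine ⟨(fun i => if i = i₀ then (k:ℝ) else if i = i₁ then -(k:ℝ) else 0) +
        fun _ => 2 * (2 * (n:ℝ) + 1), (n:ℝ) + 1, ?_, by positivity, ?_⟩
    · intro i
      have h2 := abs_le.1 (hzb k hk i)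
      simp only [Pi.add_apply]
      have : (0:ℝ) ≤ n := by positivity
      linarith
    · ext x
      simp only [Set.mem_ofPred_eq, Pi.sub_apply, Pi.add_apply]
      constructor
      · intro hx
        refine ⟨fun i => ?_, fun i => by rw [abs_sub_comm]; exact hx i⟩
        have h1 := abs_lt.1 (hx i)
        have h2 := abs_le.1 (hzb k hk i)
        have : (0:ℝ) ≤ n := by positivity
        linarith
      · rintro ⟨_, hx⟩ i
        rw [abs_sub_comm]; exact hx i

lemma sq_abs_lt (d : ℕ) (x : Fin d → ℝ) (r : ℝ) (hr : 0 < r) (h : ∑ i, x i ^ 2 < r ^ 2)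
    (i : Fin d) : |x i| < r := by
  have h1 : x i ^ 2 ≤ ∑ i, x i ^ 2 :=
    Finset.single_le_sum (f := fun i => x i ^ 2) (fun j _ => sq_nonneg _) (Finset.mem_univ i)
  exact abs_lt_of_sq_lt_sq (h1.trans_lt h) hr.le

/-- The shift step in the Euclidean slab estimate. -/
lemma eucl_shift (d : ℕ) (hd : 0 < d) (i₀ i₁ : Fin d) (hi : i₀ ≠ i₁) (h : ℝ) (hh : 0 < h)
    (k : ℕ) : ∃ w : Fin d → ℝ, ∑ i, w i = k ∧ w i₀ - w i₁ = k * (2 * h) ∧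
      ∀ x ∈ {x : Fin d → ℝ | ∑ i, x i ^ 2 < (h ^ 2 / 2) ^ 2},
        k * (2 * h) ≤ x i₀ - x i₁ → x - w ∈ {x : Fin d → ℝ | ∑ i, x i ^ 2 < (h ^ 2 / 2) ^ 2} := by
  have hd' : (0:ℝ) < d := by exact_mod_cast hd
  set q : Fin d → ℝ := fun i => if i = i₀ then k * h else if i = i₁ then -(k * h) else 0 with hq
  have hqs : ∑ i, q i = 0 := by rw [hq, sum_two d i₀ i₁ hi]; ring
  refine ⟨fun i => q i + k / d, ?_, ?_, ?_⟩
  · rw [Finset.sum_add_distrib, hqs]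
    simp; field_simp
  · simp [hq, hi.symm]; ring
  · intro x hx hk
    simp only [Set.mem_ofPred_eq, Pi.sub_apply] at hx ⊢
    have hb := sq_abs_lt d x _ (by positivity) hx
    have hk0 : (0:ℝ) ≤ k := by positivity
    have hq2 : ∑ i, q i ^ 2 = 2 * (k * h) ^ 2 := by
      have : ∀ i, q i ^ 2 = if i = i₀ then (k * h) ^ 2 else if i = i₁ then (k * h) ^ 2 else 0 := by
        intro i; simp only [hq]; split_ifs <;> ring
      simp_rw [this]; rw [sum_two d i₀ i₁ hi]; ring
    have hqx : ∑ i, q i * x i = k * h * (x i₀ - x i₁) := by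
      have : ∀ i, q i * x i = if i = i₀ then k * h * x i₀ else
          if i = i₁ then -(k * h * x i₁) else 0 := by
        intro i; simp only [hq]; split_ifs with h1 h2
        · rw [h1]
        · rw [h2]; ring
        · ring
      simp_rw [this]; rw [sum_two d i₀ i₁ hi]; ring
    have hS : -(d * (h ^ 2 / 2)) ≤ ∑ i, x i := by
      have : ∑ i : Fin d, -(h ^ 2 / 2) ≤ ∑ i, x i :=
        Finset.sum_le_sum fun i _ => (abs_lt.1 (hb i)).1.le
      simpa using this
    have hexp : ∑ i, (x i - (q i + k / d)) ^ 2 = ∑ i, x i ^ 2 - 2 * ∑ i, q i * x i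
        + ∑ i, q i ^ 2 - 2 * (k / d) * ∑ i, x i + 2 * (k / d) * ∑ i, q i + d * (k / d) ^ 2 := by
      have : (d:ℝ) * (k / d) ^ 2 = ∑ i : Fin d, ((k:ℝ) / d) ^ 2 := by simp
      rw [this]
      simp only [Finset.mul_sum, ← Finset.sum_add_distrib, ← Finset.sum_sub_distrib]
      exact Finset.sum_congr rfl fun i _ => by ring
    rw [hexp, hq2, hqx, hqs]
    have hkh : k * (2 * h) ≤ h ^ 2 := by
      have h1 := abs_lt.1 (hb i₀)
      have h2 := abs_lt.1 (hb i₁)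
      linarith
    have hkh' : 2 * (k:ℝ) ≤ h := by nlinarith
    have e1 : k * h * (k * (2 * h)) ≤ k * h * (x i₀ - x i₁) := by gcongr
    have e2 : (k / d) * (-(d * (h ^ 2 / 2))) ≤ (k / d) * ∑ i, x i := by gcongr
    have e3 : ((k:ℝ) / d) * (-(d * (h ^ 2 / 2))) = - (k * h ^ 2 / 2) := by field_simp
    have e4 : (d:ℝ) * (k / d) ^ 2 ≤ k ^ 2 := by
      have : (d:ℝ) * (k / d) ^ 2 = k ^ 2 / d := by field_simp
      rw [this]
      exact div_le_self (by positivity) (by exact_mod_cast hd)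
    have e5 : (k:ℝ) ≤ k ^ 2 := by exact_mod_cast Nat.le_self_pow (by norm_num) k
    have e6 : (k:ℝ) * h ^ 2 ≤ k ^ 2 * h ^ 2 := by gcongr
    have e7 : (k:ℝ) ^ 2 ≤ k ^ 2 * h ^ 2 := by
      rcases Nat.eq_zero_or_pos k with h0 | h0
      · subst h0; simp
      · have : (1:ℝ) ≤ k := by exact_mod_cast h0
        have : (1:ℝ) ≤ h ^ 2 := by nlinarith
        nlinarith [sq_nonneg (k:ℝ)]
    nlinarith

lemma eucl_case (d : ℕ) (i₀ i₁ : Fin d) (hi : i₀ ≠ i₁) (n : ℕ) :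
    ∃ (D : Set (Fin d → ℝ)) (T R : ℝ) (z : ℕ → Fin d → ℝ),
      0 < T ∧ 0 < R ∧ IsOpen D ∧ 0 ∈ D ∧
      nuM d D ≤ slabC * nuM d {x | x ∈ D ∧ |x i₀ - x i₁| < T} ∧
      (∀ k, ∑ i, z k i = 0) ∧ (∀ k, z k i₀ - z k i₁ = 2 * k * T) ∧
      (∀ k < n, ∀ x : Fin d → ℝ, x - z k ∈ D → ∀ i, |x i| ≤ R) ∧
      (∀ k < n, ∀ x : Fin d → ℝ, (∀ i, |x i| < 1) → x - z k ∈ D) ∧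
      (∀ k < n, {x | x - (z k + fun _ => 2 * R) ∈ D} ∈ euclideanBallsPlus d) := by
  have hd : 0 < d := i₀.pos
  set h : ℝ := 16 * (n + 1) + d with hh
  have hh0 : 0 < h := by positivity
  set r : ℝ := h ^ 2 / 2 with hr
  have hr0 : 0 < r := by positivity
  set z : ℕ → Fin d → ℝ := fun k i =>
    if i = i₀ then 2 * k * h else if i = i₁ then -(2 * k * h) else 0 with hz
  have hzb : ∀ k < n, ∀ i, |z k i| ≤ 2 * n * h := by
    intro k hk i
    have h1 : (k:ℝ) ≤ n := by exact_mod_cast hk.le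
    have h2 : 2 * k * h ≤ 2 * n * h := by gcongr
    have h0 : (0:ℝ) ≤ 2 * k * h := by positivity
    simp only [hz]
    split_ifs
    · rw [abs_of_nonneg h0]; exact h2
    · rw [abs_neg, abs_of_nonneg h0]; exact h2
    · simp; positivity
  have hz2 : ∀ k, ∑ i, z k i ^ 2 = 8 * (k * h) ^ 2 := by
    intro k
    have : ∀ i, z k i ^ 2 = if i = i₀ then (2 * k * h) ^ 2 else
        if i = i₁ then (2 * k * h) ^ 2 else 0 := by
      intro i; simp only [hz]; split_ifs <;> ring
    simp_rw [this]; rw [sum_two d i₀ i₁ hi]; ring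
  have hO : IsOpen {x : Fin d → ℝ | ∑ i, x i ^ 2 < r ^ 2} :=
    isOpen_lt (by fun_prop) continuous_const
  have hRb : ∀ k < n, ∀ x : Fin d → ℝ, ∑ i, (x i - z k i) ^ 2 < r ^ 2 →
      ∀ i, |x i| ≤ 2 * n * h + r := by
    intro k hk x hx i
    have h1 := abs_lt.1 (sq_abs_lt d (fun i => x i - z k i) r hr0 hx i)
    have h2 := abs_le.1 (hzb k hk i)
    rw [abs_le]; constructor <;> linarith
  have hR0 : 0 < 2 * n * h + r := by positivity
  refine ⟨{x | ∑ i, x i ^ 2 < r ^ 2}, 2 * h, 2 * n * h + r, z,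
    by positivity, hR0, hO, ?_, ?_, ?_, ?_, ?_, ?_, ?_⟩
  · simp; positivity
  · refine slab d i₀ i₁ _ hO.measurableSet (2 * h) (by positivity) ?_ ?_
    · exact eucl_shift d hd i₀ i₁ hi h hh0
    · exact eucl_shift d hd i₁ i₀ hi.symm h hh0
  · intro k; rw [hz, sum_two d i₀ i₁ hi]; ring
  · intro k; simp [hz, hi.symm]; ring
  · intro k hk x hx i
    exact hRb k hk x hx i
  · intro k hk x hx
    simp only [Set.mem_ofPred_eq, Pi.sub_apply]
    have h1 : ∑ i, (x i - z k i) ^ 2 ≤ ∑ i, (2 + 2 * z k i ^ 2) := by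
      refine Finset.sum_le_sum fun i _ => ?_
      have : x i ^ 2 < 1 := (sq_lt_one_iff_abs_lt_one _).2 (hx i)
      nlinarith [sq_nonneg (x i + z k i)]
    rw [Finset.sum_add_distrib, ← Finset.mul_sum, hz2] at h1
    simp at h1
    refine h1.trans_lt ?_
    have hk1 : (k:ℝ) ≤ n := by exact_mod_cast hk.le
    have hk0 : (0:ℝ) ≤ k := by positivity
    have hd0 : (0:ℝ) ≤ d := by positivity
    have a1 : 16 * ((k:ℝ) + 1) ≤ h := by rw [hh]; linarith
    have a2 : (d:ℝ) ≤ h := by rw [hh]; linarith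
    have a3 : (16 * ((k:ℝ) + 1)) ^ 2 ≤ h ^ 2 := by gcongr
    have a4 : (16 * ((k:ℝ) + 1)) ^ 2 * h ^ 2 ≤ h ^ 2 * h ^ 2 := by gcongr
    have a5 : 16 * h ≤ h ^ 2 := by nlinarith
    have a6 : r ^ 2 = h ^ 2 * h ^ 2 / 4 := by rw [hr]; ring
    have a7 : 0 ≤ (k:ℝ) * h ^ 2 := by positivity
    have a8 : 0 ≤ (k:ℝ) ^ 2 * h ^ 2 := by positivity
    rw [a6]
    nlinarith
  · intro k hk
    refine ⟨z k + fun _ => 2 * (2 * n * h + r), r, ?_, hr0, ?_⟩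
    · intro i
      have h2 := abs_le.1 (hzb k hk i)
      simp only [Pi.add_apply]
      linarith
    · ext x
      simp only [Set.mem_ofPred_eq, Pi.sub_apply, Pi.add_apply]
      rw [Real.sqrt_lt' hr0]
      have hsw : ∑ i, (z k i + 2 * (2 * n * h + r) - x i) ^ 2 =
          ∑ i, (x i - (z k i + 2 * (2 * n * h + r))) ^ 2 :=
        Finset.sum_congr rfl fun i _ => by ring
      rw [hsw]
      refine ⟨fun hx => ⟨fun i => ?_, hx⟩, fun hx => hx.2⟩
      have h1 := hRb k hk (fun i => x i - 2 * (2 * n * h + r)) (by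
        refine lt_of_eq_of_lt (Finset.sum_congr rfl fun i _ => ?_) hx
        ring) i
      have h2 := abs_le.1 h1
      linarith

/-- For `d ≥ 2` and `α ∈ (-1,∞)^d`, neither the non-centered maximal operator over truncated
cubes of `ℝ^d_+` nor the one over truncated Euclidean balls of `ℝ^d_+` is of weak type (1,1)
with respect to `(ℝ^d_+, dμ_α)`. -/
theorem laguerre_maximal_not_weak_type_one_one (d : ℕ) (hd : 2 ≤ d) (α : Fin d → ℝ)
    (hα : ∀ i, -1 < α i) :
    (¬ ∃ C : ℝ, 0 < C ∧
      ∀ f : (Fin d → ℝ) → ℝ,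
        Integrable f ((laguerreMeasure d α).restrict (posOrthant d)) →
        ∀ lam : ℝ, 0 < lam →
          (laguerreMeasure d α).restrict (posOrthant d) {x | ENNReal.ofReal lam
              < maximalOp d ((laguerreMeasure d α).restrict (posOrthant d)) (cubesPlus d) f x}
            ≤ ENNReal.ofReal (C / lam)
              * ∫⁻ x, ENNReal.ofReal |f x| ∂((laguerreMeasure d α).restrict (posOrthant d)))
    ∧
    (¬ ∃ C : ℝ, 0 < C ∧
      ∀ f : (Fin d → ℝ) → ℝ,
        Integrable f ((laguerreMeasure d α).restrict (posOrthant d)) →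
        ∀ lam : ℝ, 0 < lam →
          (laguerreMeasure d α).restrict (posOrthant d) {x | ENNReal.ofReal lam
              < maximalOp d ((laguerreMeasure d α).restrict (posOrthant d))
                  (euclideanBallsPlus d) f x}
            ≤ ENNReal.ofReal (C / lam)
              * ∫⁻ x, ENNReal.ofReal |f x|
                  ∂((laguerreMeasure d α).restrict (posOrthant d))) := by
  have hi : (⟨0, by omega⟩ : Fin d) ≠ ⟨1, by omega⟩ := by simp
  exact ⟨key d α _ _ _ (cubes_case d _ _ hi), key d α _ _ _ (eucl_case d _ _ hi)⟩
end

section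
/- Let d ≥ 2. There is a constant C > 0 depending only on d such that the following holds. Let ξ ∈ ℝ^d_+, set s = |ξ|₁ = ξ₁ + ⋯ + ξ_d, let M > 0, and define c ∈ ℝ^d by cᵢ = ξᵢ for i = 1,…,d−1 and c_d = ξ_d + M. Then the closed diamond D = {x ∈ ℝ^d_+ : |x − c|₁ ≤ M} satisfies μ(D) ≤ C · (1 + s − ξ_d)^{d−1} · e^{−s}. (Note s − ξ_d = ξ₁ + ⋯ + ξ_{d−1} ≥ 0, every x ∈ D has x_d ≥ ξ_d and |x|₁ ≥ s, and both ξ and (0,…,0,N) with N = c_d − M + M would lie in D.) -/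
open MeasureTheory ENNReal

lemma lint_exp_Ioi (a : ℝ) :
    ∫⁻ t in Set.Ioi a, ENNReal.ofReal (Real.exp (-t)) = ENNReal.ofReal (Real.exp (-a)) := by
  rw [← integral_exp_neg_Ioi a, ofReal_integral_eq_lintegral_ofReal]
  · exact (exp_neg_integrableOn_Ioi a one_pos).congr_fun (fun x _ => by simp) measurableSet_Ioi
  · exact Filter.Eventually.of_forall fun x => (Real.exp_pos _).le

noncomputable def gAux (a x : ℝ) : ℝ≥0∞ :=
  if 0 < x then ENNReal.ofReal (Real.exp (-x - |x - a|)) else 0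

lemma gAux_meas (a : ℝ) : Measurable (gAux a) := by
  unfold gAux
  exact Measurable.ite measurableSet_Ioi (by fun_prop) measurable_const

lemma gAux_lint (a : ℝ) (ha : 0 < a) :
    ∫⁻ x, gAux a x ≤ ENNReal.ofReal ((1 + a) * Real.exp (-a)) := by
  have h : ∀ x, gAux a x ≤ (Set.Ioc 0 a).indicator (fun _ => ENNReal.ofReal (Real.exp (-a))) x
      + (Set.Ioi a).indicator (fun t => ENNReal.ofReal (Real.exp (-t))) x := by
    intro x
    unfold gAux
    split_ifs with h0
    · by_cases hx : x ≤ a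
      · rw [Set.indicator_of_mem (show x ∈ Set.Ioc 0 a from ⟨h0, hx⟩)]
        refine le_trans (ENNReal.ofReal_le_ofReal (Real.exp_le_exp.2 ?_)) le_self_add
        rw [abs_of_nonpos (by linarith)]; linarith
      · push Not at hx
        rw [Set.indicator_of_mem (show x ∈ Set.Ioi a from hx)]
        refine le_trans (ENNReal.ofReal_le_ofReal (Real.exp_le_exp.2 ?_)) le_add_self
        have := abs_nonneg (x - a); linarith
    · exact zero_le
  refine (lintegral_mono h).trans ?_
  rw [lintegral_add_left (measurable_const.indicator measurableSet_Ioc),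
    lintegral_indicator measurableSet_Ioc, lintegral_indicator measurableSet_Ioi, lint_exp_Ioi]
  simp only [lintegral_const, Measure.restrict_apply_univ, Real.volume_Ioc, sub_zero]
  rw [← ENNReal.ofReal_mul (Real.exp_pos _).le, ← ENNReal.ofReal_add (by positivity) (by positivity)]
  exact ENNReal.ofReal_le_ofReal (by linarith)

noncomputable def GAux {n : ℕ} (η : Fin n → ℝ) (b : ℝ) (p : ℝ × (Fin n → ℝ)) : ℝ≥0∞ :=
  if (∀ i, 0 < p.2 i) ∧ b + ∑ i, |p.2 i - η i| ≤ p.1 then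
    ENNReal.ofReal (Real.exp (-p.1 - ∑ i, p.2 i)) else 0

lemma GAux_meas {n : ℕ} (η : Fin n → ℝ) (b : ℝ) : Measurable (GAux η b) := by
  unfold GAux
  refine Measurable.ite ?_ (by fun_prop) measurable_const
  refine MeasurableSet.inter ?_ ?_
  · show MeasurableSet {p : ℝ × (Fin n → ℝ) | ∀ i, 0 < p.2 i}
    rw [Set.ofPred_forall]
    exact MeasurableSet.iInter fun i => measurableSet_lt (by fun_prop) (by fun_prop)
  · exact measurableSet_le (f := fun p : ℝ × (Fin n → ℝ) => b + ∑ i, |p.2 i - η i|)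
      (g := fun p => p.1) (by fun_prop) (by fun_prop)

lemma GAux_inner {n : ℕ} (η : Fin n → ℝ) (b : ℝ) (y : Fin n → ℝ) :
    ∫⁻ t, GAux η b (t, y) ≤ ENNReal.ofReal (Real.exp (-b)) * ∏ i, gAux (η i) (y i) := by
  by_cases hy : ∀ i, 0 < y i
  · have h1 : ∀ t, GAux η b (t, y) = (Set.Ici (b + ∑ i, |y i - η i|)).indicator
        (fun t => ENNReal.ofReal (Real.exp (- ∑ i, y i)) * ENNReal.ofReal (Real.exp (-t))) t := by
      intro t
      simp only [GAux, hy, implies_true, true_and, Set.indicator, Set.mem_Ici]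
      split_ifs
      · rw [← ENNReal.ofReal_mul (Real.exp_pos _).le, ← Real.exp_add]
        congr 2; ring
      · rfl
    have h2 : ∏ i, gAux (η i) (y i) = ENNReal.ofReal (Real.exp (∑ i, (- y i - |y i - η i|))) := by
      rw [Real.exp_sum, ENNReal.ofReal_prod_of_nonneg (fun i _ => (Real.exp_pos _).le)]
      exact Finset.prod_congr rfl fun i _ => by simp [gAux, hy i]
    simp_rw [h1]
    rw [lintegral_indicator measurableSet_Ici, lintegral_const_mul _ (by fun_prop),
      setLIntegral_congr Ioi_ae_eq_Ici.symm, lint_exp_Ioi, h2,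
      ← ENNReal.ofReal_mul (Real.exp_pos _).le, ← ENNReal.ofReal_mul (Real.exp_pos _).le,
      ← Real.exp_add, ← Real.exp_add]
    apply le_of_eq
    congr 2
    rw [Finset.sum_sub_distrib, Finset.sum_neg_distrib]; ring
  · have : ∀ t, GAux η b (t, y) = 0 := fun t => by simp [GAux, hy]
    simp [this]

lemma lint_prod_aux {n : ℕ} (f : Fin n → ℝ → ℝ≥0∞) (hf : ∀ i, Measurable (f i)) :
    ∫⁻ y : Fin n → ℝ, ∏ i, f i (y i) = ∏ i, ∫⁻ x, f i x := by
  induction n with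
  | zero => simp [volume_pi, Measure.pi_of_empty]
  | succ n ih =>
    have hmp := (volume_preserving_piFinSuccAbove (fun _ : Fin (n + 1) => ℝ) 0).symm
    have hm : ∀ k : ℕ, ∀ g : Fin k → ℝ → ℝ≥0∞, (∀ i, Measurable (g i)) →
        Measurable fun y : Fin k → ℝ => ∏ i, g i (y i) := fun k g hg =>
      Finset.measurable_prod _ fun i _ => (hg i).comp (measurable_pi_apply i)
    rw [← hmp.lintegral_comp (hm _ f hf), Fin.prod_univ_succ,
      ← ih (fun i => f i.succ) (fun i => hf _)]
    have e : (volume : Measure (ℝ × (Fin n → ℝ))) = (volume : Measure ℝ).prod volume := rfl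
    rw [← lintegral_prod_mul (hf 0).aemeasurable (hm n _ fun i => hf i.succ).aemeasurable]
    refine lintegral_congr fun p => ?_
    rw [Fin.prod_univ_succ]
    simp [MeasurableEquiv.piFinSuccAbove]

lemma GAux_lint {n : ℕ} (η : Fin n → ℝ) (hη : ∀ i, 0 < η i) (b : ℝ) :
    ∫⁻ p, GAux η b p ≤ ENNReal.ofReal
      ((1 + ∑ i, η i) ^ n * Real.exp (-(∑ i, η i + b))) := by
  have e : (volume : Measure (ℝ × (Fin n → ℝ))) = (volume : Measure ℝ).prod volume := rfl
  rw [e, lintegral_prod_symm _ (GAux_meas η b).aemeasurable]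
  refine (lintegral_mono (GAux_inner η b)).trans ?_
  rw [lintegral_const_mul _ (by
    exact Finset.measurable_prod _ fun i _ => (gAux_meas _).comp (measurable_pi_apply i)),
    lint_prod_aux (fun i => gAux (η i)) (fun i => gAux_meas (η i))]
  have hp : ∏ i, ∫⁻ x, gAux (η i) x ≤
      ENNReal.ofReal (∏ i, ((1 + ∑ i, η i) * Real.exp (-η i))) := by
    rw [ENNReal.ofReal_prod_of_nonneg]
    · refine Finset.prod_le_prod' fun i _ => (gAux_lint _ (hη i)).trans ?_
      refine ENNReal.ofReal_le_ofReal (mul_le_mul_of_nonneg_right ?_ (Real.exp_pos _).le)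
      have := Finset.single_le_sum (f := η) (fun i _ => (hη i).le) (Finset.mem_univ i)
      linarith
    · intro i _
      have := Finset.sum_nonneg (s := Finset.univ) (f := η) (fun i _ => (hη i).le)
      positivity
  refine (mul_le_mul_right hp _).trans ?_
  rw [← ENNReal.ofReal_mul (Real.exp_pos _).le]
  refine ENNReal.ofReal_le_ofReal (le_of_eq ?_)
  rw [Finset.prod_mul_distrib, ← Real.exp_sum, Finset.prod_const, Finset.card_univ,
    Fintype.card_fin, Finset.sum_neg_distrib, neg_add, Real.exp_add]
  ring

/-- Upper bound for the measure of the closed diamond `D = {x ∈ ℝ^d_+ : |x - c|₁ ≤ M}` with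
`cᵢ = ξᵢ` for `i < d` and `c_d = ξ_d + M`:  `μ(D) ≤ C (1 + s - ξ_d)^{d-1} e^{-s}` where
`s = |ξ|₁`, with `C` depending only on `d`. -/
theorem diamond_touching_axis_measure_bound (d : ℕ) (hd : 2 ≤ d) :
    ∃ C : ℝ, 0 < C ∧
      ∀ ξ : Fin d → ℝ, (∀ i, 0 < ξ i) → ∀ M : ℝ, 0 < M →
        expMeasure d {x : Fin d → ℝ | (∀ i, 0 < x i) ∧
            ∑ i, |x i - (if (i : ℕ) = d - 1 then ξ i + M else ξ i)| ≤ M}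
          ≤ ENNReal.ofReal
              (C * (1 + ((∑ i, ξ i) - ξ ⟨d - 1, by omega⟩)) ^ (d - 1)
                * Real.exp (-∑ i, ξ i)) := by
  obtain ⟨n, rfl⟩ : ∃ n, d = n + 1 := ⟨d - 1, by omega⟩
  refine ⟨1, one_pos, fun ξ hξ M hM => ?_⟩
  have hlast : (⟨n + 1 - 1, by omega⟩ : Fin (n + 1)) = Fin.last n := rfl
  rw [hlast]
  have hmeas : MeasurableSet {x : Fin (n + 1) → ℝ | (∀ i, 0 < x i) ∧
      ∑ i, |x i - (if (i : ℕ) = n + 1 - 1 then ξ i + M else ξ i)| ≤ M} := by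
    refine MeasurableSet.inter ?_ ?_
    · show MeasurableSet {p : Fin (n + 1) → ℝ | ∀ i, 0 < p i}
      rw [Set.ofPred_forall]
      exact MeasurableSet.iInter fun i => measurableSet_lt (by fun_prop) (by fun_prop)
    · exact measurableSet_le (f := fun x : Fin (n + 1) → ℝ =>
        ∑ i, |x i - (if (i : ℕ) = n + 1 - 1 then ξ i + M else ξ i)|)
        (g := fun _ => M) (by fun_prop) (by fun_prop)
  let η : Fin n → ℝ := fun i => ξ i.castSucc
  have hsum : ∑ i, ξ i = ∑ i, η i + ξ (Fin.last n) := Fin.sum_univ_castSucc ξ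
  have key := GAux_lint η (fun i => hξ _) (ξ (Fin.last n))
  have hmp := volume_preserving_piFinSuccAbove (fun _ : Fin (n + 1) => ℝ) (Fin.last n)
  rw [← hmp.lintegral_comp (GAux_meas η _)] at key
  rw [expMeasure, withDensity_apply _ hmeas, ← lintegral_indicator hmeas]
  refine (lintegral_mono fun x => ?_).trans (key.trans (le_of_eq ?_))
  · by_cases hxD : x ∈ {x : Fin (n + 1) → ℝ | (∀ i, 0 < x i) ∧
      ∑ i, |x i - (if (i : ℕ) = n + 1 - 1 then ξ i + M else ξ i)| ≤ M}
    swap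
    · rw [Set.indicator_of_notMem hxD]; exact zero_le
    rw [Set.indicator_of_mem hxD]
    obtain ⟨hx, hs⟩ := hxD
    have e1 : (MeasurableEquiv.piFinSuccAbove (fun _ : Fin (n + 1) => ℝ) (Fin.last n)) x
        = (x (Fin.last n), fun i => x i.castSucc) := by
      ext i <;> simp [MeasurableEquiv.piFinSuccAbove, Fin.init]
    simp only [e1]
    rw [Fin.sum_univ_castSucc] at hs
    have h3 : ∀ i : Fin n, ¬ ((i : ℕ) = n) := by
      intro i; have := i.2; omega
    simp only [Fin.val_castSucc, h3, if_false, Fin.val_last, Nat.add_sub_cancel, if_true] at hs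
    rw [GAux, if_pos]
    · refine ENNReal.ofReal_le_ofReal (Real.exp_le_exp.2 (le_of_eq ?_))
      rw [Fin.sum_univ_castSucc]
      simp only [abs_of_pos (hx _)]
      ring
    · refine ⟨fun i => hx _, ?_⟩
      have := neg_abs_le (x (Fin.last n) - (ξ (Fin.last n) + M))
      show ξ (Fin.last n) + ∑ i : Fin n, |x i.castSucc - ξ i.castSucc| ≤ x (Fin.last n)
      linarith
  · rw [hsum, one_mul, add_sub_cancel_right, Nat.add_sub_cancel]
end
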